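/- arXiv:1504.01029 — 2 statements merged into one kernel-verified Lean document; each statement's English description precedes it below -/
import Mathlib

section
/- The volume radius of the set D of all density matrices on ℂ^n satisfies lim_{n→∞} √n · vrad(D) = e^{−1/4}, i.e., vrad(D) ∼ e^{−1/4}/√n as n → ∞. -/
/-!
The volume of the set of density matrices is computed exactly, and its asymptotics follow from
Stirling-type bounds.

**Volume.** For a Haar measure `dA` on the Hermitian `n × n` matrices, consider the quotient of
`∫_{A ≥ 0} e^{-Tr A} dA` by `∫ e^{-Tr A²} dA`. It does not depend on the choice of `dA`
(`haar_transport`), so it may be evaluated in any linear coordinates, and two systems are compared.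

* In block coordinates `(a, v, B)`, with `a` real, `v ∈ ℂⁿ` and `B` Hermitian of size `n`, the
  Schur complement criterion says that for `a > 0` the matrix is positive semidefinite iff
  `B - v v* / a` is. Translating `B` and integrating the Gaussian in `v` multiplies the cone
  integral by `∫_{a > 0} e^{-a} (π a)ⁿ da = πⁿ n!`, while the Gaussian integral is multiplied by
  `√π (π/2)ⁿ`. Induction on `n` gives the quotient `∏_{k<n} 2^k k! / √π` (`lintegral_coneWeight`).
* In the coordinates `A = t • 1 + f x`, the section of the cone at height `t > 0` is the set of
  states (centred at `1/n`) dilated by `n t`, so the cone integral is `N!/n` times the volume of the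
  set of states, `N = n² - 1`, and the Gaussian integral is `√(π/n) π^{N/2}`.

Equating the two values yields `vol D` (`volume_stateSet`).

**Asymptotics.** After division by the volume of the unit ball, the logarithm of the volume ratio
involves `∑_{k<n} log k! = n²/2 log n - 3/4 n² + O(n log n)`, `log N! = N log N - N + O(log N)` and
`log Γ(N/2+1) = (log N!)/2 - (N/2) log 2 + O(log N)`; the last one comes from Legendre's duplication
formula. The terms of order `n² log n` and `n² log 2` cancel, and the remaining coefficient of `n²`
is `-3/4 + 1/2 = -1/4` (`tendsto_log_volRatio`).
-/

open MeasureTheory Metric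
open scoped ComplexOrder RealInnerProductSpace

noncomputable section

/-- The uniform probability measure on the unit Euclidean sphere of `ℝ^N`. -/
def sphereUniform (N : ℕ) : Measure (sphere (0 : EuclideanSpace ℝ (Fin N)) 1) :=
  (((volume : Measure (EuclideanSpace ℝ (Fin N))).toSphere Set.univ)⁻¹) •
    (volume : Measure (EuclideanSpace ℝ (Fin N))).toSphere

/-- `f` identifies `ℝ^N` isometrically with the subspace of traceless Hermitian matrices,
equipped with the Hilbert–Schmidt inner product `⟨A, B⟩ = Tr(AB)`. -/
structure IsHermParam {ι : Type*} [Fintype ι] {N : ℕ}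
    (f : EuclideanSpace ℝ (Fin N) →ₗ[ℝ] Matrix ι ι ℂ) : Prop where
  herm : ∀ x, (f x).IsHermitian
  traceless : ∀ x, (f x).trace = 0
  inner_eq : ∀ x y, ((f x * f y).trace).re = ⟪x, y⟫
  surj : ∀ A : Matrix ι ι ℂ, A.IsHermitian → A.trace = 0 → ∃ x, f x = A

/-- The mean width of a set of matrices, computed in the traceless Hermitian subspace
via an isometric parametrization `f`:
`w(K) = ∫_S max_{M ∈ K} Tr(X M) dσ(X)`, with `σ` the uniform probability measure on the
Hilbert–Schmidt unit sphere of traceless Hermitian matrices. -/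
def matMeanWidth {ι : Type*} [Fintype ι] {N : ℕ}
    (f : EuclideanSpace ℝ (Fin N) →ₗ[ℝ] Matrix ι ι ℂ) (K : Set (Matrix ι ι ℂ)) : ℝ :=
  ∫ u, sSup ((fun M => ((f u * M).trace).re) '' K) ∂(sphereUniform N)

/-- The maximally mixed state `𝟙/n`. -/
def maxMixed (ι : Type*) [Fintype ι] [DecidableEq ι] : Matrix ι ι ℂ :=
  ((Fintype.card ι : ℂ))⁻¹ • 1

/-- The volume radius of a set `K` of trace-one matrices, computed in the hyperplane of
trace-one Hermitian matrices (centered at the maximally mixed state) via an isometric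
parametrization `f` of the traceless Hermitian subspace:
`vrad(K) = (vol K / vol B)^(1/N)`. -/
def matVolRad {ι : Type*} [Fintype ι] [DecidableEq ι] {N : ℕ}
    (f : EuclideanSpace ℝ (Fin N) →ₗ[ℝ] Matrix ι ι ℂ) (K : Set (Matrix ι ι ℂ)) : ℝ :=
  ((volume (f ⁻¹' ((fun A => A - maxMixed ι) '' K))).toReal /
      (volume (ball (0 : EuclideanSpace ℝ (Fin N)) 1)).toReal) ^ ((N : ℝ)⁻¹)

/-- The set of density matrices (states). -/
def densityMatrices (ι : Type*) [Fintype ι] : Set (Matrix ι ι ℂ) :=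
  {ρ | ρ.PosSemidef ∧ ρ.trace = 1}

end

noncomputable section

namespace DensityVolume

/-! ### Haar measures on Hermitian matrices -/

section Measure

/-- The real vector space of Hermitian `n × n` matrices. -/
abbrev Herm (n : ℕ) : Submodule ℝ (Matrix (Fin n) (Fin n) ℂ) :=
  selfAdjoint.submodule ℝ (Matrix (Fin n) (Fin n) ℂ)

local instance hermMeasurableSpace (n : ℕ) : MeasurableSpace (Herm n) := borel _

local instance hermBorelSpace (n : ℕ) : BorelSpace (Herm n) := ⟨rfl⟩

local instance hermSecondCountable (n : ℕ) : SecondCountableTopology (Herm n) :=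
  haveI : SecondCountableTopology (Matrix (Fin n) (Fin n) ℂ) :=
    inferInstanceAs (SecondCountableTopology (Fin n → Fin n → ℂ))
  TopologicalSpace.Subtype.secondCountableTopology _

local instance hermLocallyCompact (n : ℕ) : LocallyCompactSpace (Herm n) :=
  haveI : LocallyCompactSpace (Matrix (Fin n) (Fin n) ℂ) :=
    inferInstanceAs (LocallyCompactSpace (Fin n → Fin n → ℂ))
  (Submodule.closed_of_finiteDimensional (Herm n)).isClosedEmbedding_subtypeVal.locallyCompactSpace

/-- Any two Haar measures on linearly isomorphic spaces agree up to a constant factor. -/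
lemma haar_transport {E F : Type*} [AddCommGroup E] [Module ℝ E]
    [TopologicalSpace E] [IsTopologicalAddGroup E] [ContinuousSMul ℝ E] [T2Space E]
    [FiniteDimensional ℝ E] [MeasurableSpace E] [BorelSpace E]
    [AddCommGroup F] [Module ℝ F]
    [TopologicalSpace F] [IsTopologicalAddGroup F] [ContinuousSMul ℝ F] [T2Space F]
    [LocallyCompactSpace F] [SecondCountableTopology F] [FiniteDimensional ℝ F]
    [MeasurableSpace F] [BorelSpace F]
    (φ : E ≃ₗ[ℝ] F) (ν : Measure E) [ν.IsAddHaarMeasure] (μ : Measure F) [μ.IsAddHaarMeasure] :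
    ∃ c : ENNReal, c ≠ 0 ∧ c ≠ ⊤ ∧ ∀ g : F → ENNReal, ∫⁻ y, g y ∂μ = c * ∫⁻ x, g (φ x) ∂ν := by
  let ψ : E ≃L[ℝ] F := φ.toContinuousLinearEquiv
  have hmap : (ν.map ψ).IsAddHaarMeasure := ψ.isAddHaarMeasure_map ν
  have h := Measure.isAddLeftInvariant_eq_smul μ (ν.map ψ)
  refine ⟨μ.addHaarScalarFactor (ν.map ψ), ?_, ENNReal.coe_ne_top, fun g => ?_⟩
  · exact_mod_cast (Measure.addHaarScalarFactor_pos_of_isAddHaarMeasure μ (ν.map ψ)).ne'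
  · conv_lhs => rw [h]
    rw [lintegral_smul_measure]
    have : ∫⁻ y, g y ∂(ν.map ψ) = ∫⁻ x, g (φ x) ∂ν :=
      lintegral_map_equiv g ψ.toHomeomorph.toMeasurableEquiv
    rw [this]; rfl

/-- The function `e^{-Tr A}` on the positive semidefinite cone, zero elsewhere. -/
def coneWeight {n : ℕ} (A : Matrix (Fin n) (Fin n) ℂ) : ENNReal :=
  open Classical in if A.PosSemidef then ENNReal.ofReal (Real.exp (-A.trace.re)) else 0

/-- The Gaussian weight `e^{-Tr A²}`. -/
def gaussWeight {n : ℕ} (A : Matrix (Fin n) (Fin n) ℂ) : ENNReal :=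
  ENNReal.ofReal (Real.exp (-(A * A).trace.re))

lemma isClosed_posSemidef (n : ℕ) : IsClosed {A : Herm n | A.1.PosSemidef} := by
  have : {A : Herm n | A.1.PosSemidef} =
      ⋂ x : Fin n → ℂ, {A : Herm n | 0 ≤ star x ⬝ᵥ (A.1.mulVec x)} := by
    ext A
    simp only [Set.mem_ofPred_eq, Set.mem_iInter, Matrix.posSemidef_iff_dotProduct_mulVec]
    exact ⟨fun h => h.2, fun h => ⟨A.2, h⟩⟩
  rw [this]
  refine isClosed_iInter fun x => ?_
  apply isClosed_le continuous_const
  fun_prop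

lemma measurable_coneWeight (n : ℕ) : Measurable (fun A : Herm n => coneWeight A.1) := by
  classical
  unfold coneWeight
  refine Measurable.ite (isClosed_posSemidef n).measurableSet ?_ measurable_const
  have : Continuous fun A : Herm n => Real.exp (-A.1.trace.re) := by fun_prop
  exact this.measurable.ennreal_ofReal

/-! ### Block coordinates and the Schur complement -/

/-- The block decomposition `Fin (n+1) ≃ Fin n ⊕ Unit`, splitting off the index `0`. -/
def splitEquiv (n : ℕ) : Fin (n + 1) ≃ Fin n ⊕ Unit :=
  (finSuccEquiv n).trans (Equiv.optionEquivSumPUnit (Fin n))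

/-- The matrix with blocks `B`, `v`, `v*`, `a`; it is Hermitian when `B` is. -/
def blockMat {n : ℕ} (a : ℝ) (v : EuclideanSpace ℂ (Fin n)) (B : Matrix (Fin n) (Fin n) ℂ) :
    Matrix (Fin (n + 1)) (Fin (n + 1)) ℂ :=
  (Matrix.fromBlocks B (Matrix.replicateCol Unit v.ofLp)
    (Matrix.replicateCol Unit v.ofLp).conjTranspose (Matrix.diagonal fun _ => (a : ℂ))).submatrix (splitEquiv n) (splitEquiv n)

lemma trace_fromBlocks' {n : ℕ} (A : Matrix (Fin n) (Fin n) ℂ) (B : Matrix (Fin n) Unit ℂ)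
    (C : Matrix Unit (Fin n) ℂ) (D : Matrix Unit Unit ℂ) :
    (Matrix.fromBlocks A B C D).trace = A.trace + D.trace := by
  simp [Matrix.trace]

lemma trace_submatrix_splitEquiv {n : ℕ} (M : Matrix (Fin n ⊕ Unit) (Fin n ⊕ Unit) ℂ) :
    (M.submatrix (splitEquiv n) (splitEquiv n)).trace = M.trace :=
  (splitEquiv n).sum_comp fun i => M i i

lemma isHermitian_blockMat {n : ℕ} (a : ℝ) (v : EuclideanSpace ℂ (Fin n))
    {B : Matrix (Fin n) (Fin n) ℂ} (hB : B.IsHermitian) : (blockMat a v B).IsHermitian := by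
  apply Matrix.IsHermitian.submatrix
  rw [Matrix.isHermitian_fromBlocks_iff]
  refine ⟨hB, rfl, by simp, ?_⟩
  ext i j; simp

lemma trace_blockMat {n : ℕ} (a : ℝ) (v : EuclideanSpace ℂ (Fin n))
    (B : Matrix (Fin n) (Fin n) ℂ) : (blockMat a v B).trace.re = a + B.trace.re := by
  unfold blockMat
  rw [trace_submatrix_splitEquiv, trace_fromBlocks']
  simp [add_comm]

lemma trace_sq_blockMat {n : ℕ} (a : ℝ) (v : EuclideanSpace ℂ (Fin n))
    (B : Matrix (Fin n) (Fin n) ℂ) :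
    (blockMat a v B * blockMat a v B).trace.re = a ^ 2 + 2 * ‖v‖ ^ 2 + (B * B).trace.re := by
  have hv : ‖v‖ ^ 2 = ∑ i, ‖v i‖ ^ 2 := EuclideanSpace.norm_sq_eq v
  unfold blockMat
  rw [Matrix.submatrix_mul_equiv, trace_submatrix_splitEquiv, Matrix.fromBlocks_multiply,
    trace_fromBlocks', Matrix.trace_add, Matrix.trace_add]
  have h1 : (Matrix.replicateCol Unit v.ofLp *
      (Matrix.replicateCol Unit v.ofLp).conjTranspose).trace.re = ‖v‖ ^ 2 := by
    rw [hv]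
    simp [Matrix.trace, Matrix.mul_apply, Complex.mul_conj, Complex.normSq_eq_norm_sq]
    norm_cast
  rw [Matrix.trace_mul_comm (Matrix.replicateCol Unit v.ofLp).conjTranspose]
  simp only [Complex.add_re, h1]
  simp
  ring

/-- The Schur complement criterion for the block `a`. -/
lemma posSemidef_blockMat {n : ℕ} {a : ℝ} (ha : 0 < a) (v : EuclideanSpace ℂ (Fin n))
    (B : Matrix (Fin n) (Fin n) ℂ) :
    (blockMat a v B).PosSemidef ↔
      (B - (a⁻¹ : ℝ) • (Matrix.vecMulVec v.ofLp (star v.ofLp))).PosSemidef := by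
  unfold blockMat
  rw [Matrix.posSemidef_submatrix_equiv]
  have hD : (Matrix.diagonal fun _ : Unit => (a : ℂ)).PosDef := by
    apply Matrix.PosDef.diagonal
    intro i; simpa using ha
  let := hD.isUnit.invertible
  rw [hD.fromBlocks₂₂]
  congr! 2
  ext i j
  simp [Matrix.mul_apply, Matrix.vecMulVec_apply, Ring.inverse_eq_inv']
  ring

lemma not_posSemidef_blockMat {n : ℕ} {a : ℝ} (ha : a < 0) (v : EuclideanSpace ℂ (Fin n))
    (B : Matrix (Fin n) (Fin n) ℂ) : ¬ (blockMat a v B).PosSemidef := by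
  intro h
  unfold blockMat at h
  rw [Matrix.posSemidef_submatrix_equiv] at h
  have := h.diag_nonneg (i := Sum.inr ())
  simp at this
  linarith

/-- The linear coordinates `(a, v, B)` on Hermitian matrices of size `n + 1`. -/
def blockEquiv (n : ℕ) :
    (ℝ × EuclideanSpace ℂ (Fin n) × Herm n) ≃ₗ[ℝ] Herm (n + 1) :=
  LinearEquiv.ofBijective
    { toFun := fun p => ⟨blockMat p.1 p.2.1 p.2.2.1, isHermitian_blockMat _ _ p.2.2.2⟩
      map_add' := by
        intro p q
        ext i j
        simp only [blockMat, Matrix.submatrix_apply, Submodule.coe_add, Matrix.add_apply]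
        rcases splitEquiv n i with i | i <;> rcases splitEquiv n j with j | j <;> simp
      map_smul' := by
        intro c p
        ext i j
        simp only [blockMat, Matrix.submatrix_apply, Submodule.coe_smul, Matrix.smul_apply]
        rcases splitEquiv n i with i | i <;> rcases splitEquiv n j with j | j <;> simp }
    (by
      constructor
      · rw [← LinearMap.ker_eq_bot, LinearMap.ker_eq_bot']
        rintro ⟨a, v, B⟩ h
        have h' : blockMat a v B.1 = 0 := congrArg Subtype.val h
        have h2 : ∀ i j, (Matrix.fromBlocks B.1 (Matrix.replicateCol Unit v.ofLp)
            (Matrix.replicateCol Unit v.ofLp).conjTranspose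
            (Matrix.diagonal fun _ => (a : ℂ))) i j = 0 := by
          intro i j
          have := congrFun (congrFun h' ((splitEquiv n).symm i)) ((splitEquiv n).symm j)
          simpa [blockMat] using this
        refine Prod.ext ?_ (Prod.ext ?_ ?_)
        · simpa using h2 (Sum.inr ()) (Sum.inr ())
        · ext i
          simpa using h2 (Sum.inl i) (Sum.inr ())
        · ext i j
          simpa using h2 (Sum.inl i) (Sum.inl j)
      · rintro ⟨A, hA⟩
        have hA' : A.IsHermitian := hA
        let C := A.submatrix (splitEquiv n).symm (splitEquiv n).symm
        have hC : C.IsHermitian := hA'.submatrix _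
        refine ⟨(( C (Sum.inr ()) (Sum.inr ())).re,
          WithLp.toLp 2 fun i => C (Sum.inl i) (Sum.inr ()), ⟨C.toBlocks₁₁, ?_⟩), ?_⟩
        · exact hC.submatrix Sum.inl
        · apply Subtype.ext
          change blockMat _ _ _ = A
          have : A = C.submatrix (splitEquiv n) (splitEquiv n) := by
            simp [C, Matrix.submatrix_submatrix]
          conv_rhs => rw [this]
          unfold blockMat
          congr 1
          ext i j
          rcases i with i | i <;> rcases j with j | j
          · rfl
          · rfl
          · simpa using hC.apply (Sum.inr i) (Sum.inl j)
          · simpa using hC.coe_re_apply_self (Sum.inr i))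

lemma blockEquiv_apply (n : ℕ) (p : ℝ × EuclideanSpace ℂ (Fin n) × Herm n) :
    (blockEquiv n p).1 = blockMat p.1 p.2.1 p.2.2.1 := rfl

/-! ### The cone integral -/

lemma lintegral_gauss {V : Type*} [NormedAddCommGroup V] [InnerProductSpace ℝ V]
    [FiniteDimensional ℝ V] [MeasurableSpace V] [BorelSpace V] {b : ℝ} (hb : 0 < b) :
    ∫⁻ v : V, ENNReal.ofReal (Real.exp (-b * ‖v‖ ^ 2)) =
      ENNReal.ofReal ((Real.pi / b) ^ (Module.finrank ℝ V / 2 : ℝ)) := by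
  have h := GaussianFourier.integral_rexp_neg_mul_sq_norm (V := V) hb
  have hint : Integrable (fun v : V => Real.exp (-b * ‖v‖ ^ 2)) := by
    -- a non-integrable function would have integral zero
    by_contra hc
    rw [integral_undef hc] at h
    have : 0 < (Real.pi / b) ^ (Module.finrank ℝ V / 2 : ℝ) := by positivity
    linarith
  rw [← h, ofReal_integral_eq_lintegral_ofReal hint (ae_of_all _ fun _ => (Real.exp_pos _).le)]

lemma lintegral_gamma (m : ℕ) {r : ℝ} (hr : 0 < r) :
    ∫⁻ a in Set.Ioi (0 : ℝ), ENNReal.ofReal (Real.exp (-(r * a)) * a ^ m) =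
      ENNReal.ofReal (m.factorial / r ^ (m + 1)) := by
  have h := Real.integral_rpow_mul_exp_neg_mul_Ioi (a := m + 1) (r := r) (by positivity) hr
  have h0 : (m.factorial : ℝ) / r ^ (m + 1) =
      ∫ a in Set.Ioi (0 : ℝ), Real.exp (-(r * a)) * a ^ m := by
    have e : ∀ a : ℝ, Real.exp (-(r * a)) * a ^ m = a ^ ((m : ℝ) + 1 - 1) * Real.exp (-(r * a)) := by
      intro a
      rw [add_sub_cancel_right, Real.rpow_natCast, mul_comm]
    simp_rw [e]
    rw [h, Real.Gamma_nat_eq_factorial]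
    norm_cast
    rw [one_div, inv_pow]
    field_simp
  have hint : IntegrableOn (fun a : ℝ => Real.exp (-(r * a)) * a ^ m) (Set.Ioi 0) := by
    by_contra hc
    rw [integral_undef hc] at h0
    have : 0 < (m.factorial : ℝ) / r ^ (m + 1) := by positivity
    linarith
  rw [h0, ofReal_integral_eq_lintegral_ofReal hint]
  refine (ae_restrict_iff' measurableSet_Ioi).2 (ae_of_all _ fun a ha => ?_)
  have : (0 : ℝ) < a := ha
  positivity

/-- The value of the ratio between `∫_{A ≥ 0} e^{-Tr A} dA` and `∫ e^{-Tr A²} dA` over Hermitian matrices,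
which does not depend on the choice of the Haar measure `dA`. -/
def coneRatio (n : ℕ) : ℝ :=
  ∏ k ∈ Finset.range n, (2 ^ k * k.factorial / √Real.pi)

lemma trace_vecMulVec_star {n : ℕ} (v : EuclideanSpace ℂ (Fin n)) :
    (Matrix.vecMulVec v.ofLp (star v.ofLp)).trace.re = ‖v‖ ^ 2 := by
  have hv : ‖v‖ ^ 2 = ∑ i, ‖v i‖ ^ 2 := EuclideanSpace.norm_sq_eq v
  rw [hv]
  simp [Matrix.trace, Matrix.vecMulVec_apply, Complex.mul_conj, Complex.normSq_eq_norm_sq]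
  norm_cast

/-- Integrating out the block `B`: the Schur complement criterion says that `B` ranges over a
translate of the positive semidefinite cone. -/
lemma lintegral_coneWeight_block {n : ℕ} (ν : Measure (Herm n)) [ν.IsAddHaarMeasure]
    {a : ℝ} (ha : 0 < a) (v : EuclideanSpace ℂ (Fin n)) :
    ∫⁻ B : Herm n, coneWeight (blockMat a v B.1) ∂ν =
      ENNReal.ofReal (Real.exp (-a)) * ENNReal.ofReal (Real.exp (-a⁻¹ * ‖v‖ ^ 2)) *
        ∫⁻ B : Herm n, coneWeight B.1 ∂ν := by
  let W : Herm n := ⟨(a⁻¹ : ℝ) • Matrix.vecMulVec v.ofLp (star v.ofLp), by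
    apply Submodule.smul_mem
    change Matrix.conjTranspose _ = _
    ext i j
    simp [Matrix.vecMulVec_apply, mul_comm]⟩
  have key : ∀ B : Herm n, coneWeight (blockMat a v B.1) =
      ENNReal.ofReal (Real.exp (-a)) * ENNReal.ofReal (Real.exp (-a⁻¹ * ‖v‖ ^ 2)) *
        coneWeight (B - W).1 := by
    intro B
    classical
    have htr : (B - W).1.trace.re = B.1.trace.re - a⁻¹ * ‖v‖ ^ 2 := by
      rw [← trace_vecMulVec_star v]
      simp [W, Matrix.trace_sub, Matrix.trace_smul]
    have hpsd : (blockMat a v B.1).PosSemidef ↔ (B - W).1.PosSemidef := posSemidef_blockMat ha _ _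
    unfold coneWeight
    rw [htr, trace_blockMat]
    simp only [hpsd]
    split_ifs
    · rw [← ENNReal.ofReal_mul (Real.exp_pos _).le, ← ENNReal.ofReal_mul (by positivity),
        ← Real.exp_add, ← Real.exp_add]
      congr 2
      ring
    · simp
  simp_rw [key]
  rw [lintegral_const_mul' _ _ (by finiteness)]
  congr 1
  exact lintegral_sub_right_eq_self (fun B : Herm n => coneWeight B.1) W

lemma measurable_coneWeight_block (n : ℕ) :
    Measurable fun p : ℝ × EuclideanSpace ℂ (Fin n) × Herm n =>
      coneWeight (blockMat p.1 p.2.1 p.2.2.1) :=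
  (measurable_coneWeight (n + 1)).comp
    (blockEquiv n).toContinuousLinearEquiv.continuous.measurable

lemma measurable_coneWeight_block_right (n : ℕ) (a : ℝ) :
    Measurable fun q : EuclideanSpace ℂ (Fin n) × Herm n => coneWeight (blockMat a q.1 q.2.1) := by
  have h := (measurable_coneWeight_block n).comp
    (measurable_prodMk_left (x := a) (β := EuclideanSpace ℂ (Fin n) × Herm n))
  simpa only [Function.comp_def] using h

lemma lintegral_coneWeight_prod {n : ℕ} (ν : Measure (Herm n)) [ν.IsAddHaarMeasure] :
    ∫⁻ p : ℝ × EuclideanSpace ℂ (Fin n) × Herm n, coneWeight (blockMat p.1 p.2.1 p.2.2.1)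
        ∂((volume : Measure ℝ).prod ((volume : Measure (EuclideanSpace ℂ (Fin n))).prod ν)) =
      ENNReal.ofReal (Real.pi ^ n * n.factorial) * ∫⁻ B : Herm n, coneWeight B.1 ∂ν := by
  have hm := measurable_coneWeight_block n
  rw [lintegral_prod _ hm.aemeasurable]
  set J := ∫⁻ B : Herm n, coneWeight B.1 ∂ν with hJ
  have h1 : ∀ᵐ a : ℝ, (∫⁻ q, coneWeight (blockMat a q.1 q.2.1)
        ∂((volume : Measure (EuclideanSpace ℂ (Fin n))).prod ν)) =
      (Set.Ioi (0 : ℝ)).indicator (fun a =>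
        ENNReal.ofReal (Real.pi ^ n) * J * ENNReal.ofReal (Real.exp (-(1 * a)) * a ^ n)) a := by
    have h0 : ∀ᵐ a : ℝ, a ≠ 0 := by simp [ae_iff]
    filter_upwards [h0] with a ha0
    rcases lt_or_gt_of_ne ha0 with ha | ha
    · rw [Set.indicator_of_notMem (by simpa using ha.le)]
      simp [coneWeight, not_posSemidef_blockMat ha]
    · rw [Set.indicator_of_mem (by simpa using ha)]
      have hma : Measurable fun q : EuclideanSpace ℂ (Fin n) × Herm n =>
          coneWeight (blockMat a q.1 q.2.1) :=
        measurable_coneWeight_block_right n a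
      rw [lintegral_prod _ hma.aemeasurable]
      simp_rw [lintegral_coneWeight_block ν ha]
      have hm2 : Measurable fun v : EuclideanSpace ℂ (Fin n) =>
          ENNReal.ofReal (Real.exp (-a⁻¹ * ‖v‖ ^ 2)) := by fun_prop
      rw [lintegral_mul_const _ (hm2.const_mul _), lintegral_const_mul _ hm2,
        lintegral_gauss (inv_pos.2 ha)]
      have hfr : (Module.finrank ℝ (EuclideanSpace ℂ (Fin n)) : ℝ) / 2 = (n : ℕ) := by
        rw [← Module.finrank_mul_finrank ℝ ℂ (EuclideanSpace ℂ (Fin n))]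
        simp
      rw [hfr, Real.rpow_natCast, div_inv_eq_mul, mul_pow, ENNReal.ofReal_mul (by positivity),
        ENNReal.ofReal_mul (Real.exp_pos _).le, one_mul]
      ring
  rw [lintegral_congr_ae h1, lintegral_indicator measurableSet_Ioi,
    lintegral_const_mul _ (by fun_prop), lintegral_gamma n one_pos,
    ENNReal.ofReal_mul (by positivity)]
  simp only [one_pow, div_one]
  ring

lemma lintegral_gaussWeight_prod {n : ℕ} (ν : Measure (Herm n)) [ν.IsAddHaarMeasure] :
    ∫⁻ p : ℝ × EuclideanSpace ℂ (Fin n) × Herm n, gaussWeight (blockMat p.1 p.2.1 p.2.2.1)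
        ∂((volume : Measure ℝ).prod ((volume : Measure (EuclideanSpace ℂ (Fin n))).prod ν)) =
      ENNReal.ofReal (√Real.pi * (Real.pi / 2) ^ n) * ∫⁻ B : Herm n, gaussWeight B.1 ∂ν := by
  have hg : Measurable fun B : Herm n => gaussWeight B.1 := by
    have : Continuous fun B : Herm n => Real.exp (-(B.1 * B.1).trace.re) := by fun_prop
    exact this.measurable.ennreal_ofReal
  have hm1 : Measurable fun a : ℝ => ENNReal.ofReal (Real.exp (-1 * ‖a‖ ^ 2)) := by fun_prop
  have hm2 : Measurable fun v : EuclideanSpace ℂ (Fin n) =>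
      ENNReal.ofReal (Real.exp (-2 * ‖v‖ ^ 2)) := by fun_prop
  have key : ∀ p : ℝ × EuclideanSpace ℂ (Fin n) × Herm n,
      gaussWeight (blockMat p.1 p.2.1 p.2.2.1) =
      ENNReal.ofReal (Real.exp (-1 * ‖p.1‖ ^ 2)) *
        (ENNReal.ofReal (Real.exp (-2 * ‖p.2.1‖ ^ 2)) * gaussWeight p.2.2.1) := by
    intro p
    unfold gaussWeight
    rw [trace_sq_blockMat, ← ENNReal.ofReal_mul (Real.exp_pos _).le,
      ← ENNReal.ofReal_mul (Real.exp_pos _).le, ← Real.exp_add, ← Real.exp_add]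
    congr 2
    rw [Real.norm_eq_abs, sq_abs]
    ring
  simp_rw [key]
  rw [lintegral_prod_mul (f := fun a : ℝ => ENNReal.ofReal (Real.exp (-1 * ‖a‖ ^ 2)))
      (g := fun q : EuclideanSpace ℂ (Fin n) × Herm n =>
        ENNReal.ofReal (Real.exp (-2 * ‖q.1‖ ^ 2)) * gaussWeight q.2.1)
      hm1.aemeasurable ((hm2.comp measurable_fst).mul (hg.comp measurable_snd)).aemeasurable,
    lintegral_prod_mul (f := fun v : EuclideanSpace ℂ (Fin n) =>
        ENNReal.ofReal (Real.exp (-2 * ‖v‖ ^ 2)))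
      (g := fun B : Herm n => gaussWeight B.1) hm2.aemeasurable hg.aemeasurable,
    lintegral_gauss one_pos, lintegral_gauss two_pos]
  have hfr : (Module.finrank ℝ (EuclideanSpace ℂ (Fin n)) : ℝ) / 2 = (n : ℕ) := by
    rw [← Module.finrank_mul_finrank ℝ ℂ (EuclideanSpace ℂ (Fin n))]
    simp
  rw [hfr, Real.rpow_natCast, ← mul_assoc, ENNReal.ofReal_mul (by positivity)]
  congr 3
  rw [Real.sqrt_eq_rpow]
  simp

/-- The integral of `e^{-Tr A}` over the cone is `coneRatio n` times the Gaussian integral, for every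
Haar measure; the induction passes from `n` to `n + 1` through the block coordinates. -/
theorem lintegral_coneWeight (n : ℕ) (μ : Measure (Herm n)) [μ.IsAddHaarMeasure] :
    ∫⁻ A : Herm n, coneWeight A.1 ∂μ =
      ENNReal.ofReal (coneRatio n) * ∫⁻ A : Herm n, gaussWeight A.1 ∂μ := by
  induction n with
  | zero =>
    have : ∀ A : Herm 0, coneWeight A.1 = gaussWeight A.1 := by
      intro A
      have : A.1.PosSemidef := by
        rw [Subsingleton.elim A.1 0]; exact Matrix.PosSemidef.zero
      simp [coneWeight, gaussWeight, this, Matrix.trace]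
    simp [this, coneRatio]
  | succ n ih =>
    let ν : Measure (Herm n) := Measure.addHaar
    have i1 : ((volume : Measure (EuclideanSpace ℂ (Fin n))).prod ν).IsAddHaarMeasure :=
      Measure.prod.instIsAddHaarMeasure _ _
    have i2 : ((volume : Measure ℝ).prod
        ((volume : Measure (EuclideanSpace ℂ (Fin n))).prod ν)).IsAddHaarMeasure :=
      Measure.prod.instIsAddHaarMeasure _ _
    obtain ⟨c, -, -, h⟩ := haar_transport (blockEquiv n) ((volume : Measure ℝ).prod
        ((volume : Measure (EuclideanSpace ℂ (Fin n))).prod ν)) μ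
    rw [h fun A => coneWeight A.1, h fun A => gaussWeight A.1]
    simp only [blockEquiv_apply]
    rw [lintegral_coneWeight_prod, lintegral_gaussWeight_prod, ih ν]
    have hr : coneRatio (n + 1) * (√Real.pi * (Real.pi / 2) ^ n) =
        (Real.pi ^ n * n.factorial) * coneRatio n := by
      have : √Real.pi ≠ 0 := by positivity
      rw [coneRatio, Finset.prod_range_succ, ← coneRatio, div_pow]
      field_simp
    have h0 : 0 ≤ coneRatio n := Finset.prod_nonneg fun _ _ => by positivity
    have h1 : 0 ≤ coneRatio (n + 1) := Finset.prod_nonneg fun _ _ => by positivity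
    calc _ = c * (ENNReal.ofReal (Real.pi ^ n * n.factorial) * ENNReal.ofReal (coneRatio n)) *
          ∫⁻ B : Herm n, gaussWeight B.1 ∂ν := by ring
      _ = c * (ENNReal.ofReal (coneRatio (n + 1)) * ENNReal.ofReal (√Real.pi * (Real.pi / 2) ^ n)) *
          ∫⁻ B : Herm n, gaussWeight B.1 ∂ν := by
        rw [← ENNReal.ofReal_mul (by positivity), ← ENNReal.ofReal_mul h1, hr]
      _ = _ := by ring

/-! ### The volume of the set of states -/

section Slice

variable {n N : ℕ} {f : EuclideanSpace ℝ (Fin N) →ₗ[ℝ] Matrix (Fin n) (Fin n) ℂ}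

lemma trace_smul_one_add (hf : IsHermParam f) (t : ℝ) (x : EuclideanSpace ℝ (Fin N)) :
    (t • (1 : Matrix (Fin n) (Fin n) ℂ) + f x).trace.re = n * t := by
  rw [Matrix.trace_add, hf.traceless, Matrix.trace_smul, Matrix.trace_one]
  simp [mul_comm]

lemma trace_sq_smul_one_add (hf : IsHermParam f) (t : ℝ) (x : EuclideanSpace ℝ (Fin N)) :
    ((t • (1 : Matrix (Fin n) (Fin n) ℂ) + f x) *
      (t • (1 : Matrix (Fin n) (Fin n) ℂ) + f x)).trace.re = n * t ^ 2 + ‖x‖ ^ 2 := by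
  have h := hf.inner_eq x x
  rw [real_inner_self_eq_norm_sq] at h
  rw [add_mul, mul_add, mul_add, Matrix.trace_add, Matrix.trace_add, Matrix.trace_add,
    Complex.add_re, Complex.add_re, Complex.add_re, h]
  simp [hf.traceless, Matrix.trace_smul, Matrix.trace_one]
  ring

lemma one_mem_herm : (1 : Matrix (Fin n) (Fin n) ℂ) ∈ Herm n :=
  Matrix.isHermitian_one (n := Fin n) (α := ℂ)

lemma smul_one_add_mem (hf : IsHermParam f) (t : ℝ) (x : EuclideanSpace ℝ (Fin N)) :
    t • (1 : Matrix (Fin n) (Fin n) ℂ) + f x ∈ Herm n :=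
  Submodule.add_mem _ (Submodule.smul_mem _ _ one_mem_herm) (hf.herm x)

/-- Orthogonal coordinates on Hermitian matrices: a multiple of the identity plus a traceless
part parametrised by `f`. -/
def sliceEquiv (hn : 0 < n) (hf : IsHermParam f) :
    (ℝ × EuclideanSpace ℝ (Fin N)) ≃ₗ[ℝ] Herm n :=
  LinearEquiv.ofBijective
    { toFun := fun p => ⟨p.1 • (1 : Matrix (Fin n) (Fin n) ℂ) + f p.2,
        smul_one_add_mem hf p.1 p.2⟩
      map_add' := by
        intro p q
        apply Subtype.ext
        simp [add_smul]
        abel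
      map_smul' := by
        intro c p
        apply Subtype.ext
        simp [mul_smul] }
    (by
      have hn' : (n : ℝ) ≠ 0 := by positivity
      constructor
      · rw [← LinearMap.ker_eq_bot, LinearMap.ker_eq_bot']
        rintro ⟨t, x⟩ h
        have h' : t • (1 : Matrix (Fin n) (Fin n) ℂ) + f x = 0 := congrArg Subtype.val h
        have h1 := trace_smul_one_add hf t x
        have h2 := trace_sq_smul_one_add hf t x
        rw [h'] at h1 h2
        have ht : t = 0 := by simpa [hn.ne'] using h1
        have hx2 : ‖x‖ ^ 2 = 0 := by simpa [ht] using h2.symm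
        have hx : x = 0 := by simpa using hx2
        rw [ht, hx]; rfl
      · rintro ⟨A, hA⟩
        have hA' : A.IsHermitian := hA
        have htr : (A.trace.re : ℂ) = A.trace := by
          apply Complex.conj_eq_iff_re.1
          have := congrArg Matrix.trace hA'.eq
          rwa [Matrix.trace_conjTranspose] at this
        obtain ⟨x, hx⟩ := hf.surj (A - (A.trace.re / n : ℝ) • (1 : Matrix (Fin n) (Fin n) ℂ))
          (hA'.sub (Submodule.smul_mem (Herm n) _ one_mem_herm)) (by
            rw [Matrix.trace_sub, Matrix.trace_smul, Matrix.trace_one]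
            have : (n : ℂ) ≠ 0 := by exact_mod_cast hn.ne'
            simp only [Fintype.card_fin, Complex.real_smul, Complex.ofReal_div,
              Complex.ofReal_natCast, htr]
            field_simp
            simp)
        refine ⟨(A.trace.re / n, x), ?_⟩
        apply Subtype.ext
        change _ • (1 : Matrix (Fin n) (Fin n) ℂ) + f x = A
        rw [hx]
        simp)

lemma sliceEquiv_apply (hn : 0 < n) (hf : IsHermParam f) (p : ℝ × EuclideanSpace ℝ (Fin N)) :
    (sliceEquiv hn hf p).1 = p.1 • (1 : Matrix (Fin n) (Fin n) ℂ) + f p.2 := rfl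

/-- The set of density matrices in the coordinates `f`, centred at the maximally mixed state. -/
def stateSet (f : EuclideanSpace ℝ (Fin N) →ₗ[ℝ] Matrix (Fin n) (Fin n) ℂ) :
    Set (EuclideanSpace ℝ (Fin N)) :=
  {x | ((n : ℝ)⁻¹ • (1 : Matrix (Fin n) (Fin n) ℂ) + f x).PosSemidef}

lemma maxMixed_eq : maxMixed (Fin n) = (n : ℝ)⁻¹ • (1 : Matrix (Fin n) (Fin n) ℂ) := by
  ext i j
  simp [maxMixed]

lemma preimage_densityMatrices (hn : 0 < n) (hf : IsHermParam f) :
    f ⁻¹' ((fun A => A - maxMixed (Fin n)) '' densityMatrices (Fin n)) = stateSet f := by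
  ext x
  simp only [Set.mem_preimage, Set.mem_image, stateSet, densityMatrices, Set.mem_ofPred_eq,
    maxMixed_eq]
  constructor
  · rintro ⟨A, ⟨hA, -⟩, h⟩
    rwa [← h, add_sub_cancel]
  · intro h
    refine ⟨_, ⟨h, ?_⟩, add_sub_cancel_left _ _⟩
    have : (n : ℂ) ≠ 0 := by exact_mod_cast hn.ne'
    rw [Matrix.trace_add, hf.traceless, Matrix.trace_smul, Matrix.trace_one]
    simp [this]

open Pointwise in
/-- The section of the cone at trace `n * t` is a dilate of the set of states. -/
lemma section_eq_smul (hn : 0 < n) {t : ℝ} (ht : 0 < t) :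
    {x | (t • (1 : Matrix (Fin n) (Fin n) ℂ) + f x).PosSemidef} = (n * t : ℝ) • stateSet f := by
  have hn' : (0 : ℝ) < n := by exact_mod_cast hn
  have hc : (0 : ℝ) < n * t := by positivity
  have hpsd : ∀ (c : ℝ), 0 < c → ∀ M : Matrix (Fin n) (Fin n) ℂ,
      M.PosSemidef → (c • M).PosSemidef := fun c hc M hM => hM.smul hc.le
  ext x
  rw [Set.mem_smul_set_iff_inv_smul_mem₀ hc.ne']
  have e : (n : ℝ)⁻¹ • (1 : Matrix (Fin n) (Fin n) ℂ) + f ((n * t : ℝ)⁻¹ • x) =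
      (n * t : ℝ)⁻¹ • (t • (1 : Matrix (Fin n) (Fin n) ℂ) + f x) := by
    rw [map_smul, smul_add, smul_smul]
    congr 2
    field_simp
  change _ ↔ ((n : ℝ)⁻¹ • (1 : Matrix (Fin n) (Fin n) ℂ) + f ((n * t : ℝ)⁻¹ • x)).PosSemidef
  rw [e]
  refine ⟨hpsd _ (inv_pos.2 hc) _, fun h => ?_⟩
  have := hpsd _ hc _ h
  rwa [smul_inv_smul₀ hc.ne'] at this

lemma lintegral_coneWeight_slice (hn : 0 < n) (hf : IsHermParam f) :
    ∫⁻ p : ℝ × EuclideanSpace ℝ (Fin N),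
        coneWeight (p.1 • (1 : Matrix (Fin n) (Fin n) ℂ) + f p.2) ∂(volume.prod volume) =
      ENNReal.ofReal (N.factorial / n) * volume (stateSet f) := by
  classical
  have hn' : (0 : ℝ) < n := by exact_mod_cast hn
  have hm : Measurable fun p : ℝ × EuclideanSpace ℝ (Fin N) =>
      coneWeight (p.1 • (1 : Matrix (Fin n) (Fin n) ℂ) + f p.2) :=
    (measurable_coneWeight n).comp
      (sliceEquiv hn hf).toContinuousLinearEquiv.continuous.measurable
  rw [lintegral_prod _ hm.aemeasurable]
  have h1 : ∀ᵐ t : ℝ, (∫⁻ x, coneWeight (t • (1 : Matrix (Fin n) (Fin n) ℂ) + f x)) =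
      (Set.Ioi (0 : ℝ)).indicator (fun t =>
        ENNReal.ofReal ((n : ℝ) ^ N) * volume (stateSet f) *
          ENNReal.ofReal (Real.exp (-(n * t)) * t ^ N)) t := by
    have h0 : ∀ᵐ a : ℝ, a ≠ 0 := by simp [ae_iff]
    filter_upwards [h0] with t ht0
    rcases lt_or_gt_of_ne ht0 with ht | ht
    · rw [Set.indicator_of_notMem (by simpa using ht.le)]
      have : ∀ x, ¬ (t • (1 : Matrix (Fin n) (Fin n) ℂ) + f x).PosSemidef := by
        intro x hx
        have h2 := (Complex.le_def.1 hx.trace_nonneg).1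
        rw [trace_smul_one_add hf] at h2
        have : n * t < 0 := mul_neg_of_pos_of_neg hn' ht
        simp only [Complex.zero_re] at h2
        linarith
      simp [coneWeight, this]
    · rw [Set.indicator_of_mem (by simpa using ht)]
      have hcl : MeasurableSet {x | (t • (1 : Matrix (Fin n) (Fin n) ℂ) + f x).PosSemidef} := by
        have hc : Continuous fun x => sliceEquiv hn hf (t, x) :=
          (sliceEquiv hn hf).toContinuousLinearEquiv.continuous.comp (by fun_prop)
        exact ((isClosed_posSemidef n).preimage hc).measurableSet
      have e : ∀ x, coneWeight (t • (1 : Matrix (Fin n) (Fin n) ℂ) + f x) =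
          {x | (t • (1 : Matrix (Fin n) (Fin n) ℂ) + f x).PosSemidef}.indicator
            (fun _ => ENNReal.ofReal (Real.exp (-(n * t)))) x := by
        intro x
        simp only [coneWeight, trace_smul_one_add hf, Set.indicator_apply, Set.mem_ofPred_eq]
      simp_rw [e]
      rw [lintegral_indicator_const hcl, section_eq_smul hn ht, Measure.addHaar_smul,
        finrank_euclideanSpace_fin, abs_of_pos (by positivity), mul_pow,
        ENNReal.ofReal_mul (by positivity), ENNReal.ofReal_mul (Real.exp_pos _).le]
      ring
  rw [lintegral_congr_ae h1, lintegral_indicator measurableSet_Ioi,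
    lintegral_const_mul _ (by fun_prop), lintegral_gamma N hn']
  have : (N.factorial : ℝ) / n = n ^ N * (N.factorial / n ^ (N + 1)) := by
    rw [pow_succ]
    field_simp
  rw [this, ENNReal.ofReal_mul (by positivity)]
  ring

lemma lintegral_gaussWeight_slice (hn : 0 < n) (hf : IsHermParam f) :
    ∫⁻ p : ℝ × EuclideanSpace ℝ (Fin N),
        gaussWeight (p.1 • (1 : Matrix (Fin n) (Fin n) ℂ) + f p.2) ∂(volume.prod volume) =
      ENNReal.ofReal (√(Real.pi / n) * Real.pi ^ (N / 2 : ℝ)) := by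
  have hn' : (0 : ℝ) < n := by exact_mod_cast hn
  have hm1 : Measurable fun a : ℝ => ENNReal.ofReal (Real.exp (-n * ‖a‖ ^ 2)) := by fun_prop
  have hm2 : Measurable fun v : EuclideanSpace ℝ (Fin N) =>
      ENNReal.ofReal (Real.exp (-1 * ‖v‖ ^ 2)) := by fun_prop
  have key : ∀ p : ℝ × EuclideanSpace ℝ (Fin N),
      gaussWeight (p.1 • (1 : Matrix (Fin n) (Fin n) ℂ) + f p.2) =
      ENNReal.ofReal (Real.exp (-n * ‖p.1‖ ^ 2)) * ENNReal.ofReal (Real.exp (-1 * ‖p.2‖ ^ 2)) := by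
    intro p
    unfold gaussWeight
    rw [trace_sq_smul_one_add hf, ← ENNReal.ofReal_mul (Real.exp_pos _).le, ← Real.exp_add]
    congr 2
    rw [Real.norm_eq_abs, sq_abs]
    ring
  simp_rw [key]
  rw [lintegral_prod_mul (f := fun a : ℝ => ENNReal.ofReal (Real.exp (-n * ‖a‖ ^ 2)))
    (g := fun v : EuclideanSpace ℝ (Fin N) => ENNReal.ofReal (Real.exp (-1 * ‖v‖ ^ 2)))
    hm1.aemeasurable hm2.aemeasurable, lintegral_gauss hn', lintegral_gauss one_pos,
    ENNReal.ofReal_mul (by positivity), Real.sqrt_eq_rpow]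
  simp

/-- The exact volume of the set of density matrices. -/
theorem volume_stateSet (hn : 0 < n) (hf : IsHermParam f) :
    (volume (stateSet f)).toReal =
      coneRatio n * (√(Real.pi / n) * Real.pi ^ (N / 2 : ℝ)) * n / N.factorial := by
  have hn' : (0 : ℝ) < n := by exact_mod_cast hn
  obtain ⟨c, hc0, hc1, h⟩ := haar_transport (sliceEquiv hn hf)
    ((volume : Measure ℝ).prod (volume : Measure (EuclideanSpace ℝ (Fin N))))
    (Measure.addHaar : Measure (Herm n))
  have h1 := lintegral_coneWeight n (Measure.addHaar : Measure (Herm n))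
  rw [h fun A => coneWeight A.1, h fun A => gaussWeight A.1] at h1
  simp only [sliceEquiv_apply] at h1
  rw [lintegral_coneWeight_slice hn hf, lintegral_gaussWeight_slice hn hf,
    mul_left_comm (ENNReal.ofReal (coneRatio n)),
    ENNReal.mul_right_inj hc0 hc1] at h1
  have h0 : 0 ≤ coneRatio n := Finset.prod_nonneg fun _ _ => by positivity
  have h2 := congrArg ENNReal.toReal h1
  rw [ENNReal.toReal_mul, ENNReal.toReal_mul, ENNReal.toReal_ofReal (by positivity),
    ENNReal.toReal_ofReal h0, ENNReal.toReal_ofReal (by positivity)] at h2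
  have : (0 : ℝ) < N.factorial := by positivity
  rw [eq_div_iff this.ne', ← h2]
  field_simp

/-- The factors `π^{N/2}` of the two volumes cancel. -/
lemma matVolRad_eq (hn : 0 < n) (hf : IsHermParam f) (hN : 0 < N) :
    matVolRad f (densityMatrices (Fin n)) =
      (coneRatio n * √(Real.pi / n) * n * Real.Gamma (N / 2 + 1) / N.factorial) ^ ((N : ℝ)⁻¹) := by
  have : Nonempty (Fin N) := ⟨⟨0, hN⟩⟩
  unfold matVolRad
  rw [preimage_densityMatrices hn hf, volume_stateSet hn hf, EuclideanSpace.volume_ball]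
  have hG : 0 < Real.Gamma (N / 2 + 1 : ℝ) := Real.Gamma_pos_of_pos (by positivity)
  have e : √Real.pi ^ N = Real.pi ^ (N / 2 : ℝ) := by
    rw [Real.sqrt_eq_rpow, ← Real.rpow_natCast, ← Real.rpow_mul Real.pi_pos.le]
    congr 1
    ring
  have : 0 < Real.pi ^ (N / 2 : ℝ) := by positivity
  congr 1
  simp only [Fintype.card_fin, e]
  rw [ENNReal.ofReal_one, one_pow, one_mul, ENNReal.toReal_ofReal (by positivity)]
  field_simp

end Slice

/-! ### Asymptotics -/

section Asymptotics

open Filter Topology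

lemma log_succ_sub_log {k : ℕ} (hk : 0 < k) :
    1 / ((k : ℝ) + 1) ≤ Real.log (k + 1) - Real.log k ∧
      Real.log (k + 1) - Real.log k ≤ 1 / (k : ℝ) := by
  have hk' : (0 : ℝ) < k := by exact_mod_cast hk
  rw [← Real.log_div (by positivity) (by positivity)]
  constructor
  · have h := Real.one_sub_inv_le_log_of_pos (x := ((k : ℝ) + 1) / k) (by positivity)
    refine le_trans (le_of_eq ?_) h
    field_simp
    ring
  · have h := Real.log_le_sub_one_of_pos (x := ((k : ℝ) + 1) / k) (by positivity)
    refine h.trans (le_of_eq ?_)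
    field_simp
    ring

/-- A weak form of Stirling's formula, also valid at `k = 0` since `Real.log 0 = 0`. -/
lemma log_factorial_bounds (k : ℕ) :
    k * Real.log k - k ≤ Real.log k.factorial ∧
      Real.log k.factorial ≤ k * Real.log k - k + (1 + Real.log k) := by
  induction k with
  | zero => simp
  | succ k ih =>
    rcases Nat.eq_zero_or_pos k with rfl | hk
    · simp
    have hk' : (0 : ℝ) < k := by exact_mod_cast hk
    obtain ⟨h1, h2⟩ := log_succ_sub_log hk
    have h3 : (k : ℝ) * (Real.log (k + 1) - Real.log k) ≤ 1 := by
      have := mul_le_mul_of_nonneg_left h2 hk'.le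
      rwa [mul_one_div_cancel hk'.ne'] at this
    have h4 : 1 ≤ ((k : ℝ) + 1) * (Real.log (k + 1) - Real.log k) := by
      have := mul_le_mul_of_nonneg_left h1 (by positivity : (0 : ℝ) ≤ k + 1)
      rwa [mul_one_div_cancel (by positivity)] at this
    rw [Nat.factorial_succ]
    push_cast
    rw [Real.log_mul (by positivity) (by positivity)]
    constructor <;> nlinarith [ih.1, ih.2]

/-- The main terms `n²/2 log n - 3/4 n²` of the logarithm of the superfactorial. -/
lemma abs_sum_log_factorial_sub_le (n : ℕ) :
    |∑ k ∈ Finset.range n, Real.log k.factorial -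
      ((n : ℝ) ^ 2 / 2 * Real.log n - 3 / 4 * (n : ℝ) ^ 2)| ≤ n * (3 + 2 * Real.log n) := by
  induction n with
  | zero => simp
  | succ k ih =>
    rw [Finset.sum_range_succ]
    rcases Nat.eq_zero_or_pos k with rfl | hk
    · norm_num
    have hk' : (0 : ℝ) < k := by exact_mod_cast hk
    have hk1 : (1 : ℝ) ≤ k := by exact_mod_cast hk
    have hl : 0 ≤ Real.log k := Real.log_nonneg hk1
    obtain ⟨h1, h2⟩ := log_succ_sub_log hk
    obtain ⟨h5, h6⟩ := log_factorial_bounds k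
    obtain ⟨h7, h8⟩ := abs_le.1 ih
    push_cast
    set s := ∑ k ∈ Finset.range k, Real.log k.factorial
    set l := Real.log (k : ℝ)
    obtain ⟨d, hd⟩ : ∃ d, d = Real.log ((k : ℝ) + 1) - l := ⟨_, rfl⟩
    have hd' : Real.log ((k : ℝ) + 1) = l + d := by rw [hd]; ring
    rw [← hd] at h1 h2
    rw [hd']
    have h3 : (k : ℝ) * d ≤ 1 := by
      have := mul_le_mul_of_nonneg_left h2 hk'.le
      rwa [mul_one_div_cancel hk'.ne'] at this
    have h4 : 1 ≤ ((k : ℝ) + 1) * d := by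
      have := mul_le_mul_of_nonneg_left h1 (by positivity : (0 : ℝ) ≤ k + 1)
      rwa [mul_one_div_cancel (by positivity)] at this
    have hd0 : 0 ≤ d := le_trans (by positivity) h1
    have hd1 : d ≤ 1 := by nlinarith
    have h9 : (k : ℝ) * (k * d) ≤ k := by nlinarith
    have h10 : (k : ℝ) - 1 ≤ k * (k * d) := by nlinarith
    rw [abs_le]
    constructor <;> nlinarith

lemma tendsto_log_div : Tendsto (fun n : ℕ => Real.log n / n) atTop (𝓝 0) := by
  have h := Real.isLittleO_log_id_atTop.tendsto_div_nhds_zero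
  exact h.comp tendsto_natCast_atTop_atTop

lemma tendsto_sum_log_factorial :
    Tendsto (fun n : ℕ => (∑ k ∈ Finset.range n, Real.log k.factorial -
      (n : ℝ) ^ 2 / 2 * Real.log n) / (n : ℝ) ^ 2) atTop (𝓝 (-(3 / 4))) := by
  rw [tendsto_iff_norm_sub_tendsto_zero]
  have h0 : Tendsto (fun n : ℕ => 3 / (n : ℝ) + 2 * (Real.log n / n)) atTop (𝓝 0) := by
    simpa using (tendsto_const_div_atTop_nhds_zero_nat (3 : ℝ)).add (tendsto_log_div.const_mul 2)
  refine squeeze_zero' (Eventually.of_forall fun _ => norm_nonneg _) ?_ h0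
  filter_upwards [eventually_gt_atTop 0] with n hn
  have hn' : (0 : ℝ) < n := by exact_mod_cast hn
  have h := abs_sum_log_factorial_sub_le n
  have e : (∑ k ∈ Finset.range n, Real.log k.factorial -
      (n : ℝ) ^ 2 / 2 * Real.log n) / (n : ℝ) ^ 2 - -(3 / 4) =
      (∑ k ∈ Finset.range n, Real.log k.factorial -
      ((n : ℝ) ^ 2 / 2 * Real.log n - 3 / 4 * (n : ℝ) ^ 2)) / (n : ℝ) ^ 2 := by
    field_simp
    ring
  rw [e, Real.norm_eq_abs, abs_div, abs_of_pos (by positivity : (0 : ℝ) < (n : ℝ) ^ 2),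
    div_le_iff₀ (by positivity)]
  refine h.trans (le_of_eq ?_)
  field_simp

lemma tendsto_log_factorial :
    Tendsto (fun N : ℕ => (Real.log N.factorial - N * Real.log N) / N) atTop (𝓝 (-1)) := by
  have h0 : Tendsto (fun n : ℕ => -1 + (1 / (n : ℝ) + Real.log n / n)) atTop (𝓝 (-1)) := by
    simpa using ((tendsto_const_div_atTop_nhds_zero_nat (1 : ℝ)).add tendsto_log_div).const_add (-1)
  refine tendsto_of_tendsto_of_tendsto_of_le_of_le' tendsto_const_nhds h0 ?_ ?_
  · filter_upwards [eventually_gt_atTop 0] with N hN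
    have hN' : (0 : ℝ) < N := by exact_mod_cast hN
    rw [le_div_iff₀ hN']
    linarith [(log_factorial_bounds N).1]
  · filter_upwards [eventually_gt_atTop 0] with N hN
    have hN' : (0 : ℝ) < N := by exact_mod_cast hN
    rw [div_le_iff₀ hN']
    have := (log_factorial_bounds N).2
    field_simp
    linarith

/-- `Γ(N/2+1)²` equals `2^{-N} √π N!` up to a factor polynomial in `N`, by Legendre's duplication
formula and monotonicity of `Γ`. -/
lemma log_Gamma_half_bounds {N : ℕ} (hN : 3 ≤ N) :
    Real.log Real.pi / 4 ≤ Real.log (Real.Gamma (N / 2 + 1)) - Real.log N.factorial / 2 +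
        N / 2 * Real.log 2 ∧
      Real.log (Real.Gamma (N / 2 + 1)) - Real.log N.factorial / 2 + N / 2 * Real.log 2 ≤
        Real.log Real.pi / 4 + Real.log N / 2 := by
  have hN' : (3 : ℝ) ≤ N := by exact_mod_cast hN
  have hdup := Real.Gamma_mul_Gamma_add_half ((N : ℝ) / 2 + 1 / 2)
  have e1 : (N : ℝ) / 2 + 1 / 2 + 1 / 2 = N / 2 + 1 := by ring
  have e2 : 2 * ((N : ℝ) / 2 + 1 / 2) = N + 1 := by ring
  have e3 : 1 - ((N : ℝ) + 1) = -N := by ring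
  rw [e1, e2, e3, Real.Gamma_nat_eq_factorial] at hdup
  have ha : 0 < Real.Gamma ((N : ℝ) / 2 + 1 / 2) := Real.Gamma_pos_of_pos (by positivity)
  have hb : 0 < Real.Gamma ((N : ℝ) / 2 + 1) := Real.Gamma_pos_of_pos (by positivity)
  have hab : Real.Gamma ((N : ℝ) / 2 + 1 / 2) ≤ Real.Gamma ((N : ℝ) / 2 + 1) :=
    Real.Gamma_strictMonoOn_Ici.monotoneOn (by simp only [Set.mem_Ici]; linarith)
      (by simp only [Set.mem_Ici]; linarith) (by linarith)
  have hbc : Real.Gamma ((N : ℝ) / 2 + 1) ≤ N * Real.Gamma ((N : ℝ) / 2 + 1 / 2) := by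
    have h := Real.Gamma_strictMonoOn_Ici.monotoneOn (a := (N : ℝ) / 2 + 1)
      (b := (N : ℝ) / 2 + 1 / 2 + 1) (by simp only [Set.mem_Ici]; linarith)
      (by simp only [Set.mem_Ici]; linarith) (by linarith)
    rw [Real.Gamma_add_one (s := (N : ℝ) / 2 + 1 / 2) (by positivity)] at h
    refine h.trans ?_
    gcongr
    linarith
  have hlog := congrArg Real.log hdup
  rw [Real.log_mul ha.ne' hb.ne', Real.log_mul (by positivity) (by positivity),
    Real.log_mul (by positivity) (by positivity), Real.log_rpow two_pos,
    Real.log_sqrt Real.pi_pos.le] at hlog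
  have l1 := Real.log_le_log ha hab
  have l2 := Real.log_le_log hb hbc
  rw [Real.log_mul (by positivity) ha.ne'] at l2
  constructor <;> linarith

lemma tendsto_log_Gamma_half :
    Tendsto (fun N : ℕ => (Real.log (Real.Gamma (N / 2 + 1)) - Real.log N.factorial / 2 +
      N / 2 * Real.log 2) / N) atTop (𝓝 0) := by
  have h1 := tendsto_const_div_atTop_nhds_zero_nat (Real.log Real.pi / 4)
  have h2 : Tendsto (fun n : ℕ => Real.log Real.pi / 4 / (n : ℝ) + Real.log n / n / 2)
      atTop (𝓝 0) := by
    simpa using h1.add (tendsto_log_div.div_const 2)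
  refine tendsto_of_tendsto_of_tendsto_of_le_of_le' h1 h2 ?_ ?_
  · filter_upwards [eventually_ge_atTop 3] with N hN
    have hN' : (0 : ℝ) < N := by exact_mod_cast (by omega : 0 < N)
    gcongr
    exact (log_Gamma_half_bounds hN).1
  · filter_upwards [eventually_ge_atTop 3] with N hN
    have hN' : (0 : ℝ) < N := by exact_mod_cast (by omega : 0 < N)
    rw [div_le_iff₀ hN']
    refine (log_Gamma_half_bounds hN).2.trans (le_of_eq ?_)
    field_simp

/-- The volume ratio `vol D / vol B` for `n × n` matrices; `N` stands for the dimension `n² - 1`. -/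
def volRatio (n N : ℕ) : ℝ :=
  coneRatio n * √(Real.pi / n) * n * Real.Gamma (N / 2 + 1) / N.factorial

lemma coneRatio_pos (n : ℕ) : 0 < coneRatio n := Finset.prod_pos fun _ _ => by positivity

lemma log_coneRatio (n : ℕ) :
    Real.log (coneRatio n) = n * (n - 1) / 2 * Real.log 2 +
      ∑ k ∈ Finset.range n, Real.log k.factorial - n / 2 * Real.log Real.pi := by
  induction n with
  | zero => simp [coneRatio]
  | succ k ih =>
    have h := coneRatio_pos k
    rw [coneRatio, Finset.prod_range_succ, ← coneRatio, Finset.sum_range_succ,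
      Real.log_mul h.ne' (by positivity), Real.log_div (by positivity) (by positivity),
      Real.log_mul (by positivity) (by positivity), Real.log_pow, Real.log_sqrt Real.pi_pos.le, ih]
    push_cast
    ring

lemma volRatio_pos {n : ℕ} (hn : 0 < n) (N : ℕ) : 0 < volRatio n N := by
  have hG : 0 < Real.Gamma (N / 2 + 1 : ℝ) := Real.Gamma_pos_of_pos (by positivity)
  have := coneRatio_pos n
  have hn' : (0 : ℝ) < n := by exact_mod_cast hn
  unfold volRatio
  positivity

lemma log_volRatio {n : ℕ} (hn : 0 < n) (N : ℕ) :
    Real.log (volRatio n N) = Real.log (coneRatio n) + Real.log Real.pi / 2 + Real.log n / 2 +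
      Real.log (Real.Gamma (N / 2 + 1)) - Real.log N.factorial := by
  have hG : 0 < Real.Gamma (N / 2 + 1 : ℝ) := Real.Gamma_pos_of_pos (by positivity)
  have := coneRatio_pos n
  have hn' : (0 : ℝ) < n := by exact_mod_cast hn
  unfold volRatio
  rw [Real.log_div (by positivity) (by positivity), Real.log_mul (by positivity) (by positivity),
    Real.log_mul (by positivity) (by positivity), Real.log_mul (by positivity) (by positivity),
    Real.log_sqrt (by positivity), Real.log_div (by positivity) (by positivity)]
  ring

lemma tendsto_log_volRatio :
    Tendsto (fun n : ℕ => Real.log n / 2 +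
      Real.log (volRatio n (n ^ 2 - 1)) / ((n ^ 2 - 1 : ℕ) : ℝ)) atTop (𝓝 (-(1 / 4))) := by
  -- the sequence equals `(N/2 log n + log (volRatio n N)) / n²` divided by `N / n²`; its numerator
  -- splits into the terms controlled by the limits below
  have hNat : Tendsto (fun n : ℕ => n ^ 2 - 1) atTop atTop := by
    refine tendsto_atTop_mono (f := fun n : ℕ => n - 1) (fun n => ?_) (tendsto_sub_atTop_nat 1)
    have : n ≤ n ^ 2 := Nat.le_self_pow two_ne_zero n
    show n - 1 ≤ n ^ 2 - 1
    omega
  have hinv : Tendsto (fun n : ℕ => 1 / (n : ℝ)) atTop (𝓝 0) :=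
    tendsto_const_div_atTop_nhds_zero_nat 1
  -- the quotient `N / n²` for `N = n² - 1`
  have hq : Tendsto (fun n : ℕ => 1 - (1 / (n : ℝ)) ^ 2) atTop (𝓝 1) := by
    simpa using (hinv.pow 2).const_sub 1
  have hlogq : Tendsto (fun n : ℕ => Real.log (1 - (1 / (n : ℝ)) ^ 2)) atTop (𝓝 0) := by
    simpa using hq.log one_ne_zero
  have hA := tendsto_sum_log_factorial
  have hB := tendsto_log_factorial.comp hNat
  have hC := tendsto_log_Gamma_half.comp hNat
  have hll := tendsto_log_div.mul hinv
  have hmain := ((hA.add (((hC.sub (hB.div_const 2)).sub (hlogq.div_const 2)).mul hq)).add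
    (((hll.add ((hinv.pow 2).sub hinv |>.mul_const (Real.log 2 / 2)))).add
      (((hinv.pow 2).sub hinv).mul_const (Real.log Real.pi / 2)))).div hq one_ne_zero
  have hlim : ((-(3 / 4) + (0 - -1 / 2 - 0 / 2) * 1) + (0 * 0 + (0 ^ 2 - 0) * (Real.log 2 / 2) +
      (0 ^ 2 - 0) * (Real.log Real.pi / 2))) / 1 = -(1 / 4 : ℝ) := by norm_num
  rw [hlim] at hmain
  refine hmain.congr' ?_
  filter_upwards [eventually_ge_atTop 2] with n hn
  have hn' : (2 : ℝ) ≤ n := by exact_mod_cast hn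
  have hn1 : 1 ≤ n ^ 2 := Nat.one_le_pow _ _ (by omega)
  have hNr : ((n ^ 2 - 1 : ℕ) : ℝ) = (n : ℝ) ^ 2 - 1 := by push_cast [hn1]; ring
  have hNpos : (0 : ℝ) < (n : ℝ) ^ 2 - 1 := by nlinarith
  have hq' : 1 - (1 / (n : ℝ)) ^ 2 = ((n : ℝ) ^ 2 - 1) / (n : ℝ) ^ 2 := by field_simp
  have hlq : Real.log (1 - (1 / (n : ℝ)) ^ 2) = Real.log ((n : ℝ) ^ 2 - 1) - 2 * Real.log n := by
    rw [hq', Real.log_div hNpos.ne' (by positivity), Real.log_pow]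
    push_cast; ring
  simp only [Function.comp_apply, Pi.div_apply]
  rw [log_volRatio (by omega), log_coneRatio, hlq, hq', hNr]
  have : (n : ℝ) ≠ 0 := by positivity
  have := hNpos.ne'
  generalize Real.log ((n : ℝ) ^ 2 - 1) = lN
  generalize Real.log (Real.Gamma (((n : ℝ) ^ 2 - 1) / 2 + 1)) = G
  generalize Real.log ((n ^ 2 - 1).factorial : ℝ) = F
  generalize ∑ k ∈ Finset.range n, Real.log (k.factorial : ℝ) = s
  generalize Real.log (n : ℝ) = l
  field_simp
  ring

end Asymptotics

end Measure

end DensityVolume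

end

/-- The volume radius of the set of density matrices on `ℂ^n` satisfies
`vrad(D) ∼ e^{-1/4}/√n`, i.e. `√n · vrad(D) → e^{-1/4}` as `n → ∞`. -/
theorem volRad_densityMatrices_asymptotics
    (f : ∀ n : ℕ, EuclideanSpace ℝ (Fin (n ^ 2 - 1)) →ₗ[ℝ] Matrix (Fin n) (Fin n) ℂ)
    (hf : ∀ n, IsHermParam (f n)) :
    Filter.Tendsto (fun n : ℕ => Real.sqrt n * matVolRad (f n) (densityMatrices (Fin n)))
      Filter.atTop (nhds (Real.exp (-(1 / 4)))) := by
  have h := (Real.continuous_exp.tendsto _).comp DensityVolume.tendsto_log_volRatio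
  refine h.congr' ?_
  filter_upwards [Filter.eventually_ge_atTop 2] with n hn
  have hn0 : 0 < n := by omega
  have hN : 0 < n ^ 2 - 1 := by
    have : 2 ^ 2 ≤ n ^ 2 := Nat.pow_le_pow_left hn 2
    omega
  have hn' : (0 : ℝ) < n := by exact_mod_cast hn0
  rw [DensityVolume.matVolRad_eq hn0 (hf n) hN, ← DensityVolume.volRatio,
    Real.rpow_def_of_pos (DensityVolume.volRatio_pos hn0 _), Function.comp_apply, Real.exp_add, Real.sqrt_eq_rpow,
    Real.rpow_def_of_pos hn']
  simp only [div_eq_mul_inv, one_mul]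
end

section
/- For every k ≥ 2 and d ≥ 2, the set S_(2) of biseparable states on (ℂ^d)^{⊗k} satisfies vrad(S_(2)) ≤ w(S_(2)) ≤ (C + C_{d,k}) / d^{(k+1)/2}, where C = min{ 6√(ln(1+2/δ)) / (1−2δ²)² : 1/10 < δ < 1/4 } ≤ 11 and C_{d,k} = √(8 k ln 2) / d^{(k−1)/2} (so C_{d,k} → 0 as d → ∞). -/
/-!
The left inequality is Urysohn's inequality `vrad K ≤ w(K)` (`urysohn`). It is derived from the
Brunn–Minkowski inequality (`brunn_minkowski`, itself a case of Prékopa–Leindler): the volume of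
`(1 - s) B + s K` is bounded below by Brunn–Minkowski and above, in polar coordinates, by the integral
of the `N`-th power of the support function; comparing first order terms at `s = 0` gives the claim.

For the right inequality, the support function of the biseparable states in direction `u` is the
maximum of the expectation values `Re Tr(f u · |φ⟩⟨φ| ⊗ |ψ⟩⟨ψ|)` over bipartitions and unit vectors.
Fix `1/20`-nets of the unit spheres of the two tensor factors. For fixed `ψ` (or `φ`) the expectation
value is a quadratic form, so its maximum is at most `5/4` times the maximum over net points
(`abs_prodForm_le_of_net`). Each factor has dimension at most `D = d^(k-1)`, hence there are at
most `2^k 41^(4D)` triples of a bipartition and two net points (`exists_sphere_net`). For each one,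
the expectation value is an inner product of `u` with a vector of norm at most `1`, which exceeds `t`
in absolute value with probability at most `2 exp(-N t²/2)`, `N = d^(2k) - 1` (`sphereUniform_abs_le`).
Taking `t` such that the union bound gives failure probability `3^(-D)`, where the trivial bound `1`
on the support function is used, the mean width is at most
`(6 √(ln 9) √D + √(8 k ln 2)) / d^k` (`exists_deviation_level`). Since `1 + 2/δ > 9` for `δ < 1/4`,
the constant `C` is at least `6 √(ln 9)`, which is the bound claimed. The choice `δ = 1/8` shows that
`C ≤ 11`.
-/

open scoped ComplexOrder

noncomputable section

/-- Index type for `(ℂ^d)^{⊗ k}`. -/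
abbrev MIdx (k d : ℕ) := Fin k → Fin d

/-- Operators on `(ℂ^d)^{⊗ k}`. -/
abbrev MOp (k d : ℕ) := Matrix (MIdx k d) (MIdx k d) ℂ

/-- A bipartition of the `k` subsystems is a nonempty proper subset. -/
def IsBipartition {k : ℕ} (b : Finset (Fin k)) : Prop := b.Nonempty ∧ b ≠ Finset.univ

/-- The finset of all bipartitions. -/
def bipartitions (k : ℕ) : Finset (Finset (Fin k)) :=
  Finset.univ.filter fun b => b.Nonempty ∧ b ≠ Finset.univ

/-- Index type of the subsystems in `b`. -/
abbrev SubIdx {k : ℕ} (d : ℕ) (b : Finset (Fin k)) := {i : Fin k // i ∈ b} → Fin d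

/-- Index type of the subsystems in the complement of `b`. -/
abbrev CoIdx {k : ℕ} (d : ℕ) (b : Finset (Fin k)) := {i : Fin k // i ∉ b} → Fin d

def restr {k d : ℕ} (b : Finset (Fin k)) (x : MIdx k d) : SubIdx d b := fun i => x i
def corestr {k d : ℕ} (b : Finset (Fin k)) (x : MIdx k d) : CoIdx d b := fun i => x i

/-- The pure product state `|φ⟩⟨φ| ⊗ |ψ⟩⟨ψ|` across the bipartition `{b|b̄}`. -/
def prodPure {k d : ℕ} (b : Finset (Fin k)) (φ : SubIdx d b → ℂ) (ψ : CoIdx d b → ℂ) :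
    MOp k d := fun x y =>
  φ (restr b x) * ψ (corestr b x) * star (φ (restr b y)) * star (ψ (corestr b y))

/-- States separable across the bipartition `{b|b̄}`. -/
def SepAcross {k : ℕ} (d : ℕ) (b : Finset (Fin k)) : Set (MOp k d) :=
  convexHull ℝ {M | ∃ (φ : SubIdx d b → ℂ) (ψ : CoIdx d b → ℂ),
    (∑ x, ‖φ x‖ ^ 2 = 1) ∧ (∑ y, ‖ψ y‖ ^ 2 = 1) ∧ M = prodPure b φ ψ}

/-- Biseparable states: the convex hull of the union of the separable sets over all
bipartitions. -/
def Biseparable (k d : ℕ) : Set (MOp k d) :=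
  convexHull ℝ (⋃ b ∈ bipartitions k, SepAcross d b)

/-- A state: positive semidefinite with unit trace. -/
def IsState {n : Type*} [Fintype n] (ρ : Matrix n n ℂ) : Prop :=
  ρ.PosSemidef ∧ ρ.trace = 1

/-- The positive part `[A]_+` of a Hermitian matrix `A` (junk value `0` otherwise). -/
noncomputable def matPosPart {n : Type*} [Fintype n] [DecidableEq n] (A : Matrix n n ℂ) :
    Matrix n n ℂ :=
  if hA : A.IsHermitian then
    (hA.eigenvectorUnitary : Matrix n n ℂ) *
      Matrix.diagonal (fun i => ((max (hA.eigenvalues i) 0 : ℝ) : ℂ)) *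
      star (hA.eigenvectorUnitary : Matrix n n ℂ)
  else 0

/-- `A ⪰ B` in the positive semidefinite (Loewner) order. -/
def Loewner {n : Type*} [Fintype n] (A B : Matrix n n ℂ) : Prop := (A - B).PosSemidef

end


open MeasureTheory Metric
open scoped RealInnerProductSpace

noncomputable section

/-- The partial transposition across the bipartition `{b|b̄}` (transposing the tensor
factor corresponding to `b`). -/
def ptrans {k d : ℕ} (b : Finset (Fin k)) (M : MOp k d) : MOp k d := fun x y =>
  M (fun j => if j ∈ b then y j else x j) (fun j => if j ∈ b then x j else y j)

/-- The set of states on `(ℂ^d)^{⊗k}` which are PPT across every bipartition. -/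
def FullyPPT (k d : ℕ) : Set (MOp k d) :=
  {ρ | IsState ρ ∧ ∀ b ∈ bipartitions k, (ptrans b ρ).PosSemidef}

end

section Proof

open Set
open scoped ENNReal Pointwise

local notation "EN" n => EuclideanSpace ℝ (Fin n)

/-! ### The Prékopa–Leindler and Brunn–Minkowski inequalities -/

/-- One-dimensional Brunn–Minkowski for compact sets: the translates `K + min L` and `max K + L`
lie in the sum set and meet in one point only. -/
theorem compact_sum_volume_real {K L : Set ℝ} (hK : IsCompact K) (hL : IsCompact L)
    (hKn : K.Nonempty) (hLn : L.Nonempty) {C : Set ℝ}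
    (hC : ∀ x ∈ K, ∀ y ∈ L, x + y ∈ C) : volume K + volume L ≤ volume C := by
  obtain ⟨p, hp, hpm⟩ := hK.exists_isGreatest hKn
  obtain ⟨q, hq, hqm⟩ := hL.exists_isLeast hLn
  have h1 : volume ((fun x => x + q) '' K) = volume K := by
    rw [image_add_right, measure_preimage_add_right]
  have h2 : volume ((fun x => p + x) '' L) = volume L := by
    rw [image_add_left, measure_preimage_add]
  have hm : MeasurableSet ((fun x => p + x) '' L) :=
    (hL.image (by fun_prop)).measurableSet
  have hintegr : volume ((fun x => x + q) '' K ∩ (fun x => p + x) '' L) = 0 := by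
    refine measure_mono_null (t := {p + q}) ?_ (by simp)
    rintro z ⟨⟨x, hx, rfl⟩, ⟨y, hy, hxy⟩⟩
    have := hpm hx
    have := hqm hy
    simp only at hxy
    simp only [mem_singleton_iff]
    linarith
  have := measure_union_add_inter (μ := volume) ((fun x => x + q) '' K) hm
  rw [hintegr, add_zero, h1, h2] at this
  rw [← this]
  refine measure_mono ?_
  rintro z (⟨x, hx, rfl⟩ | ⟨x, hx, rfl⟩)
  · exact hC _ hx _ hq
  · exact hC _ hp _ hx

/-- One-dimensional Brunn–Minkowski for measurable sets, by inner regularity. -/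
theorem weighted_sum_volume_real {A B C : Set ℝ} (hA : MeasurableSet A) (hB : MeasurableSet B)
    (hAn : A.Nonempty) (hBn : B.Nonempty) {a b : ℝ} (ha : 0 < a) (hb : 0 < b)
    (hC : ∀ x ∈ A, ∀ y ∈ B, a * x + b * y ∈ C) :
    ENNReal.ofReal a * volume A + ENNReal.ofReal b * volume B ≤ volume C := by
  have key : ∀ K ⊆ A, IsCompact K → ∀ L ⊆ B, IsCompact L →
      ENNReal.ofReal a * volume K + ENNReal.ofReal b * volume L ≤ volume C := by
    intro K hKA hK L hLB hL
    obtain ⟨x0, hx0⟩ := hAn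
    obtain ⟨y0, hy0⟩ := hBn
    have hK' : IsCompact ((fun x => a * x) '' (insert x0 K)) := (hK.insert x0).image (by fun_prop)
    have hL' : IsCompact ((fun x => b * x) '' (insert y0 L)) := (hL.insert y0).image (by fun_prop)
    have := compact_sum_volume_real (C := C) hK' hL' (by simp) (by simp) (by
      rintro _ ⟨x, hx, rfl⟩ _ ⟨y, hy, rfl⟩
      refine hC x ?_ y ?_
      · rcases hx with rfl | hx
        exacts [hx0, hKA hx]
      · rcases hy with rfl | hy
        exacts [hy0, hLB hy])
    have e1 : volume ((fun x => a * x) '' (insert x0 K)) = ENNReal.ofReal a * volume (insert x0 K) := by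
      have := Measure.addHaar_smul volume a (insert x0 K)
      rw [Module.finrank_self, pow_one, abs_of_pos ha] at this
      exact this
    have e2 : volume ((fun x => b * x) '' (insert y0 L)) = ENNReal.ofReal b * volume (insert y0 L) := by
      have := Measure.addHaar_smul volume b (insert y0 L)
      rw [Module.finrank_self, pow_one, abs_of_pos hb] at this
      exact this
    rw [e1, e2] at this
    refine le_trans ?_ this
    gcongr <;> exact subset_insert _ _
  rw [hA.measure_eq_iSup_isCompact, hB.measure_eq_iSup_isCompact]
  simp only [ENNReal.mul_iSup]
  simp only [iSup_and']
  exact ENNReal.biSup_add_biSup_le' ⟨∅, by simp⟩ ⟨∅, by simp⟩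
    fun K hK L hL => key K hK.1 hK.2 L hL.1 hL.2

theorem ennreal_geom_le_arith {a b : ℝ} (ha : 0 < a) (hb : 0 < b) (hab : a + b = 1) (x y : ℝ≥0∞) :
    x ^ a * y ^ b ≤ ENNReal.ofReal a * x + ENNReal.ofReal b * y := by
  have hpq : (a⁻¹).HolderConjugate b⁻¹ := by
    rw [Real.holderConjugate_iff]
    refine ⟨(one_lt_inv₀ ha).2 (by linarith), by simpa using hab⟩
  have := ENNReal.young_inequality (x ^ a) (y ^ b) hpq
  rw [← ENNReal.rpow_mul, ← ENNReal.rpow_mul, mul_inv_cancel₀ ha.ne', mul_inv_cancel₀ hb.ne',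
    ENNReal.rpow_one, ENNReal.rpow_one, ENNReal.ofReal_inv_of_pos ha, ENNReal.ofReal_inv_of_pos hb,
    div_eq_mul_inv, div_eq_mul_inv, inv_inv, inv_inv, mul_comm x, mul_comm y] at this
  exact this

/-- One-dimensional Prékopa–Leindler for functions of supremum `1`: apply the one-dimensional
Brunn–Minkowski inequality to the superlevel sets, which are nonempty exactly below level `1`. -/
theorem prekopa_leindler_real_unit {a b : ℝ} (ha : 0 < a) (hb : 0 < b) (hab : a + b = 1)
    {f g h : ℝ → ℝ} (hf : Measurable f) (hg : Measurable g) (hh : Measurable h)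
    (hf0 : ∀ x, 0 ≤ f x) (hg0 : ∀ x, 0 ≤ g x) (hh0 : ∀ x, 0 ≤ h x)
    (hf1 : ∀ x, f x ≤ 1) (hg1 : ∀ x, g x ≤ 1)
    (hfs : ∀ t < 1, ∃ x, t < f x) (hgs : ∀ t < 1, ∃ x, t < g x)
    (H : ∀ x y, f x ^ a * g y ^ b ≤ h (a * x + b * y)) :
    (∫⁻ x, ENNReal.ofReal (f x)) ^ a * (∫⁻ x, ENNReal.ofReal (g x)) ^ b
      ≤ ∫⁻ x, ENNReal.ofReal (h x) := by
  refine (ennreal_geom_le_arith ha hb hab _ _).trans ?_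
  rw [lintegral_eq_lintegral_meas_lt volume (ae_of_all _ hf0) hf.aemeasurable,
    lintegral_eq_lintegral_meas_lt volume (ae_of_all _ hg0) hg.aemeasurable,
    lintegral_eq_lintegral_meas_lt volume (ae_of_all _ hh0) hh.aemeasurable,
    ← lintegral_const_mul' _ _ ENNReal.ofReal_ne_top,
    ← lintegral_const_mul' _ _ ENNReal.ofReal_ne_top]
  have hmeas : Measurable fun t : ℝ => ENNReal.ofReal a * volume {x | t < f x} :=
    (Antitone.measurable fun s t hst => measure_mono fun x (hx : t < f x) =>
      lt_of_le_of_lt hst hx).const_mul _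
  rw [← lintegral_add_left hmeas]
  refine setLIntegral_mono' measurableSet_Ioi fun t ht => ?_
  rcases lt_or_ge t 1 with h1 | h1
  · refine weighted_sum_volume_real (measurableSet_lt measurable_const hf)
      (measurableSet_lt measurable_const hg) (hfs t h1) (hgs t h1) ha hb ?_
    intro x hx y hy
    refine lt_of_lt_of_le ?_ (H x y)
    have h0 : (0 : ℝ) < t := ht
    calc t = t ^ a * t ^ b := by rw [← Real.rpow_add h0, hab, Real.rpow_one]
      _ < f x ^ a * g y ^ b := by
        have hx' : t < f x := hx
        have hy' : t < g y := hy
        gcongr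
  · have e1 : {x | t < f x} = ∅ := by
      ext x; simpa using (hf1 x).trans h1
    have e2 : {x | t < g x} = ∅ := by
      ext x; simpa using (hg1 x).trans h1
    simp [e1, e2]

/-- One-dimensional Prékopa–Leindler for bounded functions, by rescaling to supremum `1`. -/
theorem prekopa_leindler_real_bdd {a b : ℝ} (ha : 0 < a) (hb : 0 < b) (hab : a + b = 1)
    {f g h : ℝ → ℝ≥0∞} (hf : Measurable f) (hg : Measurable g) (hh : Measurable h)
    (hf1 : ⨆ x, f x ≠ ∞) (hg1 : ⨆ x, g x ≠ ∞)
    (H : ∀ x y, f x ^ a * g y ^ b ≤ h (a * x + b * y)) :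
    (∫⁻ x, f x) ^ a * (∫⁻ x, g x) ^ b ≤ ∫⁻ x, h x := by
  set F := ⨆ x, f x with hF
  set G := ⨆ x, g x with hG
  have hfF : ∀ x, f x ≤ F := fun x => le_iSup f x
  have hgG : ∀ x, g x ≤ G := fun x => le_iSup g x
  rcases eq_or_ne F 0 with hF0 | hF0
  · have : ∀ x, f x = 0 := fun x => le_antisymm (hF0 ▸ hfF x) bot_le
    simp [this, ha]
  rcases eq_or_ne G 0 with hG0 | hG0
  · have : ∀ x, g x = 0 := fun x => le_antisymm (hG0 ▸ hgG x) bot_le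
    simp [this, hb]
  set c := F ^ a * G ^ b with hc
  have hFa0 : F ^ a ≠ 0 := by simp [ENNReal.rpow_eq_zero_iff, hF0, hf1]
  have hGb0 : G ^ b ≠ 0 := by simp [ENNReal.rpow_eq_zero_iff, hG0, hg1]
  have hFat : F ^ a ≠ ∞ := ENNReal.rpow_ne_top_of_nonneg ha.le hf1
  have hGbt : G ^ b ≠ ∞ := ENNReal.rpow_ne_top_of_nonneg hb.le hg1
  have hc0 : c ≠ 0 := mul_ne_zero hFa0 hGb0
  have hct : c ≠ ∞ := ENNReal.mul_ne_top hFat hGbt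
  have hf1' : ∀ x, f x / F ≤ 1 := fun x => ENNReal.div_le_of_le_mul (by simpa using hfF x)
  have hg1' : ∀ x, g x / G ≤ 1 := fun x => ENNReal.div_le_of_le_mul (by simpa using hgG x)
  have key := prekopa_leindler_real_unit ha hb hab
    (f := fun x => (f x / F).toReal) (g := fun x => (g x / G).toReal)
    (h := fun x => (min (h x / c) 1).toReal) (by fun_prop) (by fun_prop) (by fun_prop)
    (fun x => ENNReal.toReal_nonneg) (fun x => ENNReal.toReal_nonneg)
    (fun x => ENNReal.toReal_nonneg)
    (fun x => ENNReal.toReal_le_of_le_ofReal zero_le_one (by simpa using hf1' x))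
    (fun x => ENNReal.toReal_le_of_le_ofReal zero_le_one (by simpa using hg1' x)) ?_ ?_ ?_
  · have e1 : ∀ x, ENNReal.ofReal (f x / F).toReal = f x / F := fun x =>
      ENNReal.ofReal_toReal (ne_top_of_le_ne_top ENNReal.one_ne_top (hf1' x))
    have e2 : ∀ x, ENNReal.ofReal (g x / G).toReal = g x / G := fun x =>
      ENNReal.ofReal_toReal (ne_top_of_le_ne_top ENNReal.one_ne_top (hg1' x))
    have e3 : ∀ x, ENNReal.ofReal (min (h x / c) 1).toReal = min (h x / c) 1 := fun x =>
      ENNReal.ofReal_toReal (ne_top_of_le_ne_top ENNReal.one_ne_top (min_le_right _ _))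
    simp only [e1, e2, e3] at key
    simp only [div_eq_mul_inv] at key
    rw [lintegral_mul_const _ hf, lintegral_mul_const _ hg, ENNReal.mul_rpow_of_nonneg _ _ ha.le,
      ENNReal.mul_rpow_of_nonneg _ _ hb.le, ENNReal.inv_rpow, ENNReal.inv_rpow,
      mul_mul_mul_comm, ← ENNReal.mul_inv (.inl hFa0) (.inl hFat), ← hc] at key
    have h2 : ∫⁻ x, min (h x * c⁻¹) 1 ≤ (∫⁻ x, h x) * c⁻¹ := by
      rw [← lintegral_mul_const _ hh]
      exact lintegral_mono fun x => min_le_left _ _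
    have h3 := key.trans h2
    rwa [ENNReal.mul_le_mul_iff_left (by simpa using hct) (by simpa using hc0)] at h3
  · intro t ht
    by_contra! hcon
    have : F ≤ ENNReal.ofReal t * F := iSup_le fun x => by
      have h1 := ENNReal.le_ofReal_iff_toReal_le
        (ne_top_of_le_ne_top ENNReal.one_ne_top (hf1' x)) (ENNReal.toReal_nonneg.trans (hcon x))
        |>.2 (hcon x)
      rwa [ENNReal.div_le_iff hF0 hf1] at h1
    refine absurd this (not_le.2 ?_)
    conv_rhs => rw [← one_mul F]
    rw [ENNReal.mul_lt_mul_iff_left hF0 hf1]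
    simpa using ht
  · intro t ht
    by_contra! hcon
    have : G ≤ ENNReal.ofReal t * G := iSup_le fun x => by
      have h1 := ENNReal.le_ofReal_iff_toReal_le
        (ne_top_of_le_ne_top ENNReal.one_ne_top (hg1' x)) (ENNReal.toReal_nonneg.trans (hcon x))
        |>.2 (hcon x)
      rwa [ENNReal.div_le_iff hG0 hg1] at h1
    refine absurd this (not_le.2 ?_)
    conv_rhs => rw [← one_mul G]
    rw [ENNReal.mul_lt_mul_iff_left hG0 hg1]
    simpa using ht
  · intro x y
    simp only [ENNReal.toReal_rpow, ← ENNReal.toReal_mul]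
    refine ENNReal.toReal_mono (ne_top_of_le_ne_top ENNReal.one_ne_top (min_le_right _ _))
      (le_min ?_ ?_)
    · rw [ENNReal.div_rpow_of_nonneg _ _ ha.le, ENNReal.div_rpow_of_nonneg _ _ hb.le,
        div_eq_mul_inv, div_eq_mul_inv, mul_mul_mul_comm,
        ← ENNReal.mul_inv (.inl hFa0) (.inl hFat), ← hc, ← div_eq_mul_inv]
      exact ENNReal.div_le_div_right (H x y) _
    · exact mul_le_one' (ENNReal.rpow_le_one (hf1' x) ha.le) (ENNReal.rpow_le_one (hg1' y) hb.le)

/-- One-dimensional Prékopa–Leindler, by truncation. -/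
theorem prekopa_leindler_real {a b : ℝ} (ha : 0 < a) (hb : 0 < b) (hab : a + b = 1)
    {f g h : ℝ → ℝ≥0∞} (hf : Measurable f) (hg : Measurable g) (hh : Measurable h)
    (H : ∀ x y, f x ^ a * g y ^ b ≤ h (a * x + b * y)) :
    (∫⁻ x, f x) ^ a * (∫⁻ x, g x) ^ b ≤ ∫⁻ x, h x := by
  rcases eq_or_ne (∫⁻ x, f x) 0 with hF0 | hF0
  · simp [hF0, ha]
  rcases eq_or_ne (∫⁻ x, g x) 0 with hG0 | hG0
  · simp [hG0, hb]
  have htr : ∀ u : ℝ → ℝ≥0∞, Measurable u →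
      Filter.Tendsto (fun m : ℕ => ∫⁻ x, min (u x) m) Filter.atTop (nhds (∫⁻ x, u x)) := by
    intro u hu
    refine lintegral_tendsto_of_tendsto_of_monotone (fun m => (by fun_prop))
      (ae_of_all _ fun x m n hmn => ?_) (ae_of_all _ fun x => ?_)
    · exact min_le_min le_rfl (by exact_mod_cast hmn)
    · have := (tendsto_const_nhds (x := u x)).min ENNReal.tendsto_nat_nhds_top
      simpa using this
  have hpos : ∀ {z : ℝ≥0∞} {r : ℝ}, 0 < r → z ≠ 0 → z ^ r ≠ 0 := by
    intro z r hr hz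
    simp [ENNReal.rpow_eq_zero_iff, hz, hr.le]
  refine le_of_tendsto (ENNReal.Tendsto.mul
    ((ENNReal.continuous_rpow_const.tendsto _).comp (htr f hf)) (.inl (hpos ha hF0))
    ((ENNReal.continuous_rpow_const.tendsto _).comp (htr g hg)) (.inl (hpos hb hG0)))
    (Filter.Eventually.of_forall fun m => ?_)
  refine prekopa_leindler_real_bdd ha hb hab (by fun_prop) (by fun_prop) hh ?_ ?_ ?_
  · exact ne_top_of_le_ne_top (ENNReal.natCast_ne_top m) (iSup_le fun x => min_le_right _ _)
  · exact ne_top_of_le_ne_top (ENNReal.natCast_ne_top m) (iSup_le fun x => min_le_right _ _)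
  · intro x y
    refine le_trans ?_ (H x y)
    gcongr <;> exact min_le_left _ _

theorem piFinSuccAbove_zero_symm {n : ℕ} (z : ℝ × (Fin n → ℝ)) :
    (MeasurableEquiv.piFinSuccAbove (fun _ : Fin (n + 1) => ℝ) 0).symm z = Fin.cons z.1 z.2 := by
  simp [MeasurableEquiv.piFinSuccAbove, Fin.insertNthEquiv]

theorem lintegral_fin_succ {n : ℕ} {f : (Fin (n + 1) → ℝ) → ℝ≥0∞} (hf : Measurable f) :
    ∫⁻ x, f x = ∫⁻ s : ℝ, ∫⁻ y : Fin n → ℝ, f (Fin.cons s y) := by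
  have e := (volume_preserving_piFinSuccAbove (fun _ : Fin (n + 1) => ℝ) 0).symm
  rw [← e.lintegral_comp hf]
  have hm : Measurable fun z => f ((MeasurableEquiv.piFinSuccAbove (fun _ : Fin (n + 1) => ℝ) 0).symm z) := by
    fun_prop
  have := lintegral_prod (μ := (volume : Measure ℝ)) (ν := (volume : Measure (Fin n → ℝ))) _ hm.aemeasurable
  simp only [piFinSuccAbove_zero_symm] at this ⊢
  exact this

/-- The Prékopa–Leindler inequality on `ℝ^n`, by induction on `n`, slicing off one coordinate. -/
theorem prekopa_leindler {a b : ℝ} (ha : 0 < a) (hb : 0 < b) (hab : a + b = 1) (n : ℕ)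
    {f g h : (Fin n → ℝ) → ℝ≥0∞} (hf : Measurable f) (hg : Measurable g) (hh : Measurable h)
    (H : ∀ x y, f x ^ a * g y ^ b ≤ h (a • x + b • y)) :
    (∫⁻ x, f x) ^ a * (∫⁻ x, g x) ^ b ≤ ∫⁻ x, h x := by
  induction n with
  | zero =>
    have e : ∀ u : (Fin 0 → ℝ) → ℝ≥0∞, ∫⁻ x, u x = u default := by
      intro u
      rw [lintegral_unique, volume_pi, Measure.pi_empty_univ, mul_one]
      exact congrArg u (Subsingleton.elim _ _)
    rw [e, e, e]
    refine (H default default).trans (le_of_eq (congrArg h (Subsingleton.elim _ _)))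
  | succ n ih =>
    have hcons : Measurable fun z : ℝ × (Fin n → ℝ) => (Fin.cons z.1 z.2 : Fin (n + 1) → ℝ) := by
      simpa only [← piFinSuccAbove_zero_symm] using
        (MeasurableEquiv.piFinSuccAbove (fun _ : Fin (n + 1) => ℝ) 0).symm.measurable
    have hcons' : ∀ s : ℝ, Measurable fun y : Fin n → ℝ => (Fin.cons s y : Fin (n + 1) → ℝ) :=
      fun s => hcons.comp measurable_prodMk_left
    rw [lintegral_fin_succ hf, lintegral_fin_succ hg, lintegral_fin_succ hh]
    refine prekopa_leindler_real ha hb hab (hf.comp hcons).lintegral_prod_right'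
      (hg.comp hcons).lintegral_prod_right' (hh.comp hcons).lintegral_prod_right' fun s t => ?_
    refine ih (hf.comp (hcons' s)) (hg.comp (hcons' t)) (hh.comp (hcons' _)) fun x y => ?_
    refine (H _ _).trans (le_of_eq ?_)
    congr 1
    ext i
    refine Fin.cases ?_ (fun j => ?_) i <;> simp

/-- The multiplicative Brunn–Minkowski inequality. -/
theorem brunn_minkowski {a b : ℝ} (ha : 0 < a) (hb : 0 < b) (hab : a + b = 1) {n : ℕ}
    {A B C : Set (EuclideanSpace ℝ (Fin n))} (hA : MeasurableSet A) (hB : MeasurableSet B)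
    (hC : MeasurableSet C) (H : ∀ x ∈ A, ∀ y ∈ B, a • x + b • y ∈ C) :
    volume A ^ a * volume B ^ b ≤ volume C := by
  have e : ∀ S : Set (EuclideanSpace ℝ (Fin n)), MeasurableSet S →
      volume S = ∫⁻ x : Fin n → ℝ, (WithLp.toLp 2 ⁻¹' S).indicator 1 x := by
    intro S hS
    have hm := (PiLp.volume_preserving_toLp (Fin n))
    rw [lintegral_indicator_one (hm.measurable hS), hm.measure_preimage hS.nullMeasurableSet]
  have hm := (PiLp.volume_preserving_toLp (Fin n)).measurable
  rw [e A hA, e B hB, e C hC]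
  refine prekopa_leindler ha hb hab n (measurable_one.indicator (hm hA))
    (measurable_one.indicator (hm hB)) (measurable_one.indicator (hm hC)) fun x y => ?_
  by_cases hx : WithLp.toLp 2 x ∈ A
  · by_cases hy : WithLp.toLp 2 y ∈ B
    · have hxy : WithLp.toLp 2 (a • x + b • y) ∈ C := H _ hx _ hy
      have hxy' : a • x + b • y ∈ (WithLp.toLp 2 : (Fin n → ℝ) → _) ⁻¹' C := hxy
      simp [indicator, hx, hy, hxy']
    · simp [indicator, hy, hb]
  · simp [indicator, hx, ha]

/-! ### The uniform measure on the sphere: concentration and Urysohn's inequality -/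

theorem volume_unitBall_ne_zero (N : ℕ) : volume (ball (0 : EN N) 1) ≠ 0 :=
  (isOpen_ball.measure_pos _ ⟨0, by simp⟩).ne'

theorem volume_unitBall_ne_top (N : ℕ) : volume (ball (0 : EN N) 1) ≠ ∞ :=
  measure_ball_lt_top.ne

theorem toSphere_eq_smul_sphereUniform {N : ℕ} (hN : 0 < N) :
    (volume : Measure (EN N)).toSphere = (N * volume (ball (0 : EN N) 1)) • sphereUniform N := by
  have h := Measure.toSphere_apply_univ (volume : Measure (EN N))
  rw [finrank_euclideanSpace_fin] at h
  rw [sphereUniform, h, smul_smul, ENNReal.mul_inv_cancel, one_smul]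
  · exact mul_ne_zero (by simpa using hN.ne') (volume_unitBall_ne_zero N)
  · exact ENNReal.mul_ne_top (by simp) (volume_unitBall_ne_top N)

theorem isProbabilityMeasure_sphereUniform {N : ℕ} (hN : 0 < N) :
    IsProbabilityMeasure (sphereUniform N) := by
  constructor
  have h := Measure.toSphere_apply_univ (volume : Measure (EN N))
  rw [finrank_euclideanSpace_fin] at h
  rw [sphereUniform, Measure.smul_apply, h, smul_eq_mul, ENNReal.inv_mul_cancel]
  · exact mul_ne_zero (by simpa using hN.ne') (volume_unitBall_ne_zero N)
  · exact ENNReal.mul_ne_top (by simp) (volume_unitBall_ne_top N)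

/-- The uniform measure of `s` is the proportion of the unit ball filled by the cone over `s`. -/
theorem sphereUniform_mul_volume_ball {N : ℕ} (hN : 0 < N) {s : Set (sphere (0 : EN N) 1)}
    (hs : MeasurableSet s) :
    sphereUniform N s * volume (ball (0 : EN N) 1) = volume (Ioo (0 : ℝ) 1 • ((↑) '' s : Set (EN N))) := by
  have h := Measure.toSphere_apply' (volume : Measure (EN N)) hs
  rw [toSphere_eq_smul_sphereUniform hN, finrank_euclideanSpace_fin, Measure.smul_apply,
    smul_eq_mul, mul_assoc] at h
  have hN' : (N : ℝ≥0∞) ≠ 0 := by simpa using hN.ne'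
  rw [ENNReal.mul_right_inj hN' (by simp)] at h
  rw [← h, mul_comm]

/-- The star body with radial function `R`: the origin together with all `r • u`, `0 < r < R u`,
`u` a unit vector. -/
def starBody {N : ℕ} (R : sphere (0 : EN N) 1 → ℝ) : Set (EN N) :=
  insert 0 (Subtype.val '' (homeomorphUnitSphereProd (EN N) ⁻¹' {p | p.2.1 < R p.1}))

theorem measurableSet_starBody {N : ℕ} {R : sphere (0 : EN N) 1 → ℝ} (hR : Continuous R) :
    MeasurableSet (starBody R) := by
  refine MeasurableSet.insert ?_ _
  refine (IsOpen.isOpenMap_subtype_val isOpen_compl_singleton _ ?_).measurableSet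
  exact (homeomorphUnitSphereProd (EN N)).continuous.isOpen_preimage _
    (isOpen_lt (by fun_prop) (by fun_prop))

/-- Volume in polar coordinates. -/
theorem volume_starBody {N : ℕ} (hN : 0 < N) {R : sphere (0 : EN N) 1 → ℝ} (hR : Continuous R)
    (hpos : ∀ u, 0 < R u) :
    volume (starBody R) =
      volume (ball (0 : EN N) 1) * ∫⁻ u, ENNReal.ofReal (R u ^ N) ∂(sphereUniform N) := by
  have : Nonempty (Fin N) := ⟨⟨0, hN⟩⟩
  have hm : MeasurableSet {p : sphere (0 : EN N) 1 × Ioi (0 : ℝ) | p.2.1 < R p.1} :=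
    (isOpen_lt (by fun_prop) (by fun_prop)).measurableSet
  have hmp := Measure.measurePreserving_homeomorphUnitSphereProd (volume : Measure (EN N))
  have h1 := hmp.measure_preimage hm.nullMeasurableSet
  rw [comap_subtype_coe_apply (measurableSet_singleton _).compl] at h1
  rw [starBody, measure_congr (insert_ae_eq_self _ _), h1, Measure.prod_apply hm, finrank_euclideanSpace_fin,
    toSphere_eq_smul_sphereUniform hN, lintegral_smul_measure]
  have h2 : ∀ u, Measure.volumeIoiPow (N - 1) (Prod.mk u ⁻¹' {p : sphere (0 : EN N) 1 × Ioi (0 : ℝ) | p.2.1 < R p.1})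
      = (N : ℝ≥0∞)⁻¹ * ENNReal.ofReal (R u ^ N) := by
    intro u
    have : Prod.mk u ⁻¹' {p : sphere (0 : EN N) 1 × Ioi (0 : ℝ) | p.2.1 < R p.1} =
        Iio ⟨R u, hpos u⟩ := by
      ext x
      simp [← Subtype.coe_lt_coe]
    rw [this, Measure.volumeIoiPow_apply_Iio, Nat.sub_add_cancel hN, Nat.cast_pred hN,
      sub_add_cancel, div_eq_inv_mul, ENNReal.ofReal_mul (by positivity),
      ENNReal.ofReal_inv_of_pos (by positivity), ENNReal.ofReal_natCast]
  simp only [h2]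
  rw [lintegral_const_mul' _ _ (by simpa using hN.ne'), smul_eq_mul, mul_comm (N : ℝ≥0∞), mul_assoc,
    ← mul_assoc (N : ℝ≥0∞), ENNReal.mul_inv_cancel (by simpa using hN.ne') (by simp), one_mul]

/-- The region cut out by the inequalities `⟪u, x⟫ < R u` lies in the star body with radial
function `R`: take `u = x / ‖x‖`. -/
theorem mem_starBody_of_inner_lt {N : ℕ} {R : sphere (0 : EN N) 1 → ℝ} {x : EN N}
    (hx : ∀ u : sphere (0 : EN N) 1, ⟪(u : EN N), x⟫ < R u) : x ∈ starBody R := by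
  by_cases h0 : x = 0
  · exact .inl h0
  · refine .inr ⟨⟨x, h0⟩, ?_, rfl⟩
    have h := hx (homeomorphUnitSphereProd (EN N) ⟨x, h0⟩).1
    simp only [mem_preimage, mem_ofPred_eq]
    refine lt_of_eq_of_lt ?_ h
    have hn : ‖x‖ ≠ 0 := by simpa using h0
    simp [homeomorphUnitSphereProd, homeomorphSphereProd, real_inner_smul_left]
    field_simp

theorem exp_le_four_mul {s : ℝ} (h1 : 1 / 2 ≤ s) (h2 : s ≤ 1) : Real.exp s ≤ 4 * s := by
  have h3 : (2 - s) ≤ Real.exp (1 - s) := by linarith [Real.add_one_le_exp (1 - s)]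
  have h4 : Real.exp s * Real.exp (1 - s) = Real.exp 1 := by rw [← Real.exp_add]; congr 1; ring
  have h5 := Real.exp_one_lt_d9
  have h6 := Real.exp_pos s
  nlinarith

/-- The cone over the spherical cap `{⟪u, v⟫ ≥ t}` fits in a ball of radius `exp (-t²/2)`. For small
`t` the ball is centred at `t • v`, for large `t` at `(2t)⁻¹ • v`. -/
theorem cone_cap_subset_closedBall {N : ℕ} {v : EN N} (hv : ‖v‖ ≤ 1) {t : ℝ} (ht : 0 ≤ t) :
    ∃ z : EN N, Ioo (0 : ℝ) 1 • ((↑) '' {u : sphere (0 : EN N) 1 | t ≤ ⟪(u : EN N), v⟫} : Set (EN N)) ⊆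
      closedBall z (Real.exp (-(t ^ 2 / 2))) := by
  have hexp : Real.exp (-(t ^ 2 / 2)) ^ 2 = Real.exp (-t ^ 2) := by
    rw [← Real.exp_nat_mul]; congr 1; push_cast; ring
  have hv2 : ‖v‖ ^ 2 ≤ 1 := pow_le_one₀ (norm_nonneg _) hv
  have main : ∀ τ : ℝ, 0 ≤ τ → (∀ r : ℝ, 0 < r → r < 1 → t ≤ 1 →
      r ^ 2 - 2 * τ * r * t + τ ^ 2 ≤ Real.exp (-t ^ 2)) →
      Ioo (0 : ℝ) 1 • ((↑) '' {u : sphere (0 : EN N) 1 | t ≤ ⟪(u : EN N), v⟫} : Set (EN N)) ⊆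
      closedBall (τ • v) (Real.exp (-(t ^ 2 / 2))) := by
    intro τ hτ h
    rintro _ ⟨r, ⟨hr0, hr1⟩, _, ⟨u, hu, rfl⟩, rfl⟩
    have hu1 : ‖(u : EN N)‖ = 1 := by simp
    have hu' : t ≤ ⟪(u : EN N), v⟫ := hu
    have ht1 : t ≤ 1 := hu'.trans ((real_inner_le_norm _ _).trans (by rw [hu1, one_mul]; exact hv))
    rw [mem_closedBall, dist_eq_norm, ← abs_of_nonneg (norm_nonneg _),
      ← abs_of_pos (Real.exp_pos (-(t ^ 2 / 2))), ← sq_le_sq, hexp]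
    refine le_trans ?_ (h r hr0 hr1 ht1)
    simp only
    rw [norm_sub_sq_real, norm_smul, norm_smul, real_inner_smul_left, real_inner_smul_right, hu1,
      Real.norm_of_nonneg hr0.le, Real.norm_of_nonneg hτ]
    have : 0 ≤ τ * r * (⟪(u : EN N), v⟫ - t) := by
      have := sub_nonneg.2 hu'
      positivity
    nlinarith [sq_nonneg τ]
  rcases le_total (t ^ 2) (1 / 2) with h | h
  · refine ⟨t • v, main t ht fun r hr0 hr1 _ => ?_⟩
    have := Real.add_one_le_exp (-t ^ 2)
    nlinarith
  · have ht0 : 0 < t := lt_of_le_of_ne ht (by rintro rfl; norm_num at h)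
    refine ⟨(1 / (2 * t)) • v, main _ (by positivity) fun r hr0 hr1 ht1 => ?_⟩
    have h1 := exp_le_four_mul h (by nlinarith)
    rw [Real.exp_neg]
    have h2 : (4 * t ^ 2)⁻¹ ≤ (Real.exp (t ^ 2))⁻¹ := by
      gcongr
    refine le_trans ?_ h2
    have : r ^ 2 - 2 * (1 / (2 * t)) * r * t + (1 / (2 * t)) ^ 2 = r ^ 2 - r + (4 * t ^ 2)⁻¹ := by
      field_simp
      ring
    rw [this]
    nlinarith

/-- Concentration of measure on the sphere: a cap at height `t` has measure at most
`exp (-N t²/2)`. -/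
theorem sphereUniform_cap_le {N : ℕ} (hN : 0 < N) {v : EN N} (hv : ‖v‖ ≤ 1) {t : ℝ} (ht : 0 ≤ t) :
    sphereUniform N {u | t ≤ ⟪(u : EN N), v⟫} ≤ ENNReal.ofReal (Real.exp (-(N * t ^ 2 / 2))) := by
  obtain ⟨z, hz⟩ := cone_cap_subset_closedBall hv ht
  have hm : MeasurableSet {u : sphere (0 : EN N) 1 | t ≤ ⟪(u : EN N), v⟫} :=
    (isClosed_le (by fun_prop) (by fun_prop)).measurableSet
  have h := sphereUniform_mul_volume_ball hN hm
  have h2 := measure_mono (μ := volume) hz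
  rw [← h, Measure.addHaar_closedBall _ _ (Real.exp_pos _).le, finrank_euclideanSpace_fin,
    ENNReal.mul_le_mul_iff_left (volume_unitBall_ne_zero N) (volume_unitBall_ne_top N)] at h2
  refine h2.trans (le_of_eq ?_)
  rw [← Real.exp_nat_mul]
  congr 2
  ring

theorem sphereUniform_abs_le {N : ℕ} (hN : 0 < N) {v : EN N} (hv : ‖v‖ ≤ 1) {t : ℝ} (ht : 0 ≤ t) :
    sphereUniform N {u | t ≤ |⟪(u : EN N), v⟫|} ≤
      ENNReal.ofReal (2 * Real.exp (-(N * t ^ 2 / 2))) := by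
  have h1 := sphereUniform_cap_le hN hv ht
  have h2 := sphereUniform_cap_le hN (v := -v) (by simpa using hv) ht
  rw [two_mul, ENNReal.ofReal_add (by positivity) (by positivity)]
  refine le_trans (measure_mono ?_) ((measure_union_le _ _).trans (add_le_add h1 h2))
  intro u hu
  rcases le_abs.1 (show t ≤ |⟪(u : EN N), v⟫| from hu) with h | h
  · exact .inl h
  · right
    simpa [inner_neg_right] using h

/-- If `∫ (1 + s g)^N ≥ 1` for all `0 < s < 1`, then `∫ g ≥ 0`: this is the derivative at `s = 0`. -/
theorem integral_nonneg_of_one_le_integral_pow {N : ℕ} (hN : 0 < N) {Ω : Type*} [MeasurableSpace Ω]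
    (μ : Measure Ω) [IsProbabilityMeasure μ] {g : Ω → ℝ} {M : ℝ} (hg : Integrable g μ)
    (hM : ∀ u, |g u| ≤ M)
    (H : ∀ s : ℝ, 0 < s → s < 1 → 1 ≤ ∫ u, (1 + s * g u) ^ N ∂μ) (hpos : ∀ u, -1 ≤ g u) :
    0 ≤ ∫ u, g u ∂μ := by
  have hN' : (0 : ℝ) < N := by exact_mod_cast hN
  have hM0 : 0 ≤ M := by
    obtain ⟨u⟩ : Nonempty Ω := μ.nonempty_of_neZero
    exact (abs_nonneg _).trans (hM u)
  have hintegr : ∀ s : ℝ, 0 < s → s ≤ 1 / (N * (M + 1) + 1) →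
      0 ≤ ∫ u, g u ∂μ + s * (N * M ^ 2) := by
    intro s hs0 hs1
    have hs : s * (N * (M + 1) + 1) ≤ 1 := by
      rwa [le_div_iff₀ (by positivity)] at hs1
    have hNM : 0 ≤ N * M := by positivity
    have hsN : 0 < s * N := by positivity
    have hs2 : s < 1 := by nlinarith
    have hpt : ∀ u, (1 + s * g u) ^ N ≤ 1 + (N * s) * g u + (N * s * M) ^ 2 := by
      intro u
      have habs : |N * s * g u| ≤ N * s * M := by
        rw [abs_mul, abs_of_pos (by positivity : (0 : ℝ) < N * s)]
        exact mul_le_mul_of_nonneg_left (hM u) (by positivity)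
      have h1 : (1 + s * g u) ^ N ≤ Real.exp (N * s * g u) := by
        rw [mul_assoc, Real.exp_nat_mul]
        refine pow_le_pow_left₀ ?_ (by linarith [Real.add_one_le_exp (s * g u)]) N
        nlinarith [hpos u]
      have h2 := Real.abs_exp_sub_one_sub_id_le (x := N * s * g u) (habs.trans (by nlinarith))
      have h3 : (N * s * g u) ^ 2 ≤ (N * s * M) ^ 2 := by
        rw [← sq_abs]; exact pow_le_pow_left₀ (abs_nonneg _) habs 2
      linarith [(abs_le.1 h2).2]
    have h4 : ∫ u, (1 + s * g u) ^ N ∂μ ≤ ∫ u, (1 + (N * s) * g u + (N * s * M) ^ 2) ∂μ := by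
      refine integral_mono_of_nonneg (ae_of_all _ fun u => ?_) ?_ (ae_of_all _ hpt)
      · have : 0 ≤ 1 + s * g u := by nlinarith [hpos u]
        exact pow_nonneg this N
      · exact ((integrable_const _).add (hg.const_mul _)).add (integrable_const _)
    have h4i : Integrable (fun u => 1 + (N * s) * g u) μ :=
      (integrable_const _).add (hg.const_mul _)
    rw [integral_add h4i (integrable_const _),
      integral_add (integrable_const _) (hg.const_mul _), integral_const_mul] at h4
    simp only [integral_const, probReal_univ, one_smul] at h4
    have h5 := (H s hs0 hs2).trans h4
    have h6 : 0 ≤ (N * s) * (∫ u, g u ∂μ + s * (N * M ^ 2)) := by nlinarith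
    exact nonneg_of_mul_nonneg_right h6 (by positivity)
  have ht : Filter.Tendsto (fun s : ℝ => ∫ u, g u ∂μ + s * (N * M ^ 2)) (nhdsWithin 0 (Ioi 0))
      (nhds (∫ u, g u ∂μ + 0 * (N * M ^ 2))) :=
    (Continuous.tendsto (by fun_prop) 0).mono_left nhdsWithin_le_nhds
  rw [zero_mul, add_zero] at ht
  refine ge_of_tendsto ht ?_
  filter_upwards [Ioo_mem_nhdsGT (show (0 : ℝ) < 1 / (N * (M + 1) + 1) by positivity)] with s hs
  exact hintegr s hs.1 hs.2.le

/-- Urysohn's inequality `vrad K ≤ w(K)`, with `h` any continuous nonnegative upper bound for the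
support function of `K`. Rescale `K` to the volume of the unit ball. By Brunn–Minkowski the body
`(1 - s) B + s K` has at least the volume of `B`, and it lies in the star body of radial function
`1 + s (h - 1)`; the first order term in `s` of the volume of the latter is the mean of `h - 1`. -/
theorem urysohn {N : ℕ} (hN : 0 < N) {K : Set (EN N)} {h : sphere (0 : EN N) 1 → ℝ}
    (hc : Continuous h) (h0 : ∀ u, 0 ≤ h u)
    (hK : ∀ x ∈ K, ∀ u : sphere (0 : EN N) 1, ⟪(u : EN N), x⟫ ≤ h u) :
    ((volume K).toReal / (volume (ball (0 : EN N) 1)).toReal) ^ ((N : ℝ)⁻¹) ≤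
      ∫ u, h u ∂(sphereUniform N) := by
  have hN' : (N : ℝ) ≠ 0 := by exact_mod_cast hN.ne'
  have := isProbabilityMeasure_sphereUniform hN
  rcases eq_or_ne (volume K).toReal 0 with hK0 | hK0
  · rw [hK0, zero_div, Real.zero_rpow (by simpa using hN')]
    exact integral_nonneg h0
  have hKp : 0 < (volume K).toReal := lt_of_le_of_ne ENNReal.toReal_nonneg hK0.symm
  have hBp : 0 < (volume (ball (0 : EN N) 1)).toReal :=
    ENNReal.toReal_pos (volume_unitBall_ne_zero N) (volume_unitBall_ne_top N)
  set r := ((volume K).toReal / (volume (ball (0 : EN N) 1)).toReal) ^ ((N : ℝ)⁻¹) with hr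
  have hrpos : 0 < r := by positivity
  have hrN : r ^ N = (volume K).toReal / (volume (ball (0 : EN N) 1)).toReal :=
    Real.rpow_inv_natCast_pow (by positivity) hN.ne'
  have hKtop : volume K ≠ ∞ := fun h => hK0 (by simp [h])
  -- `K` need not be measurable, so it is replaced by the closed convex body cut out by `h`.
  set K' : Set (EN N) := {x | ∀ u : sphere (0 : EN N) 1, ⟪(u : EN N), x⟫ ≤ h u} with hK'
  have hK'm : MeasurableSet (r⁻¹ • K') := by
    refine MeasurableSet.const_smul₀ ?_ _
    have : K' = ⋂ u : sphere (0 : EN N) 1, {x | ⟪(u : EN N), x⟫ ≤ h u} := by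
      ext x; simp [hK']
    rw [this]
    exact (isClosed_iInter fun u => isClosed_le (by fun_prop) (by fun_prop)).measurableSet
  have hvol : volume (ball (0 : EN N) 1) ≤ volume (r⁻¹ • K') := by
    rw [Measure.addHaar_smul_of_nonneg _ (by positivity), finrank_euclideanSpace_fin, inv_pow, hrN]
    refine le_trans (le_of_eq ?_) (mul_le_mul_right (measure_mono hK) _)
    rw [inv_div, ENNReal.ofReal_div_of_pos hKp, ENNReal.ofReal_toReal (volume_unitBall_ne_top N),
      ENNReal.ofReal_toReal hKtop, ENNReal.div_mul_cancel (by rintro h; simp [h] at hK0) hKtop]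
  obtain ⟨M, hM⟩ : ∃ M, ∀ u, |r⁻¹ * h u - 1| ≤ M := by
    obtain ⟨M, hM⟩ := (isCompact_range (f := fun u => |r⁻¹ * h u - 1|) (by fun_prop)).bddAbove
    exact ⟨M, fun u => hM ⟨u, rfl⟩⟩
  have hintegr : ∀ {q : sphere (0 : EN N) 1 → ℝ}, Continuous q → Integrable q (sphereUniform N) := by
    intro q hq
    exact hq.integrable_of_hasCompactSupport (HasCompactSupport.of_compactSpace _)
  have hfin : 0 ≤ ∫ u, (r⁻¹ * h u - 1) ∂(sphereUniform N) := by
    refine integral_nonneg_of_one_le_integral_pow hN _ (hintegr (by fun_prop)) hM ?_ ?_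
    · intro s hs0 hs1
      have hRc : Continuous fun u => 1 + s * (r⁻¹ * h u - 1) := by fun_prop
      have hRp : ∀ u, 0 < 1 + s * (r⁻¹ * h u - 1) := by
        intro u
        have : 0 ≤ s * (r⁻¹ * h u) := by have := h0 u; positivity
        linarith
      have hbm := brunn_minkowski (a := 1 - s) (b := s) (by linarith) hs0 (by ring)
        (A := ball (0 : EN N) 1) (B := r⁻¹ • K') (C := starBody fun u => 1 + s * (r⁻¹ * h u - 1))
        measurableSet_ball hK'm (measurableSet_starBody hRc) (by
          rintro x hx _ ⟨y, hy, rfl⟩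
          refine mem_starBody_of_inner_lt fun u => ?_
          have h1 : ⟪(u : EN N), x⟫ < 1 := by
            refine (real_inner_le_norm _ _).trans_lt ?_
            simpa using hx
          have h2 : ⟪(u : EN N), y⟫ ≤ h u := hy u
          simp only [inner_add_right, real_inner_smul_right]
          have h3 : r⁻¹ * ⟪(u : EN N), y⟫ ≤ r⁻¹ * h u := by gcongr
          nlinarith)
      rw [volume_starBody hN hRc hRp] at hbm
      have hge : volume (ball (0 : EN N) 1) ≤
          volume (ball (0 : EN N) 1) ^ (1 - s) * volume (r⁻¹ • K') ^ s := by
        calc volume (ball (0 : EN N) 1)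
            = volume (ball (0 : EN N) 1) ^ (1 - s) * volume (ball (0 : EN N) 1) ^ s := by
              rw [← ENNReal.rpow_add _ _ (volume_unitBall_ne_zero N) (volume_unitBall_ne_top N)]
              simp
          _ ≤ _ := by gcongr
      have h4 := hge.trans hbm
      rw [← ofReal_integral_eq_lintegral_ofReal (hintegr (by fun_prop))
        (ae_of_all _ fun u => (pow_pos (hRp u) N).le)] at h4
      conv_lhs at h4 => rw [← mul_one (volume _)]
      rw [ENNReal.mul_le_mul_iff_right (volume_unitBall_ne_zero N) (volume_unitBall_ne_top N),
        ENNReal.one_le_ofReal] at h4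
      exact h4
    · intro u
      have : 0 ≤ r⁻¹ * h u := by have := h0 u; positivity
      linarith
  rw [integral_sub (hintegr (by fun_prop)) (integrable_const _), integral_const_mul] at hfin
  simp only [integral_const, probReal_univ, one_smul, sub_nonneg] at hfin
  rwa [inv_mul_eq_div, one_le_div hrpos] at hfin

/-! ### Nets of the unit sphere and quadratic forms -/

/-- The balls of radius `δ/2` around `δ`-separated unit vectors are disjoint and lie in the ball of
radius `1 + δ/2`; compare volumes. -/
theorem card_le_of_separated_sphere {E : Type*} [NormedAddCommGroup E] [NormedSpace ℝ E]
    [FiniteDimensional ℝ E] {δ : ℝ} (hδ : 0 < δ) (T : Finset E) (hT : ∀ x ∈ T, ‖x‖ = 1)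
    (hsep : ∀ x ∈ T, ∀ y ∈ T, x ≠ y → δ < ‖x - y‖) :
    (T.card : ℝ) ≤ (1 + 2 / δ) ^ Module.finrank ℝ E := by
  borelize E
  let μ : Measure E := Measure.addHaar
  have hdisj : (T : Set E).PairwiseDisjoint fun x => ball x (δ / 2) := by
    intro x hx y hy hxy
    refine ball_disjoint_ball ?_
    rw [dist_eq_norm]
    linarith [hsep x hx y hy hxy]
  have hsub : (⋃ x ∈ T, ball x (δ / 2)) ⊆ ball (0 : E) (1 + δ / 2) := by
    refine iUnion₂_subset fun x hx => ball_subset_ball' ?_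
    rw [dist_zero_right, hT x hx]
    linarith
  have h := measure_mono (μ := μ) hsub
  rw [measure_biUnion_finset hdisj fun x _ => measurableSet_ball] at h
  simp only [Measure.addHaar_ball_of_pos μ _ (half_pos hδ)] at h
  rw [Measure.addHaar_ball_of_pos μ (0 : E) (show 0 < 1 + δ / 2 by positivity), Finset.sum_const, nsmul_eq_mul,
    ← mul_assoc, ENNReal.mul_le_mul_iff_left (isOpen_ball.measure_pos μ ⟨0, by simp⟩).ne'
      measure_ball_lt_top.ne, ← ENNReal.ofReal_natCast, ← ENNReal.ofReal_mul (by positivity),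
    ENNReal.ofReal_le_ofReal_iff (by positivity)] at h
  have e : (1 + 2 / δ) = (1 + δ / 2) / (δ / 2) := by field_simp; ring
  rw [e, div_pow, le_div_iff₀ (by positivity)]
  exact h

/-- A `δ`-separated subset of the unit sphere of maximal cardinality is a `δ`-net. -/
theorem exists_sphere_net {E : Type*} [NormedAddCommGroup E] [NormedSpace ℝ E]
    [FiniteDimensional ℝ E] {δ : ℝ} (hδ : 0 < δ) :
    ∃ T : Finset E, (∀ x ∈ T, ‖x‖ = 1) ∧ (∀ x, ‖x‖ = 1 → ∃ y ∈ T, ‖x - y‖ ≤ δ) ∧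
      (T.card : ℝ) ≤ (1 + 2 / δ) ^ Module.finrank ℝ E := by
  classical
  let P : ℕ → Prop := fun m => ∃ T : Finset E, T.card = m ∧ (∀ x ∈ T, ‖x‖ = 1) ∧
    (∀ x ∈ T, ∀ y ∈ T, x ≠ y → δ < ‖x - y‖)
  have hP0 : P 0 := ⟨∅, by simp⟩
  have hPle : ∀ m, P m → m ≤ ⌊(1 + 2 / δ) ^ Module.finrank ℝ E⌋₊ := by
    rintro m ⟨T, rfl, h1, h2⟩
    exact Nat.le_floor (card_le_of_separated_sphere hδ T h1 h2)
  obtain ⟨m, hm⟩ : ∃ m, m = Nat.findGreatest P ⌊(1 + 2 / δ) ^ Module.finrank ℝ E⌋₊ := ⟨_, rfl⟩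
  have hspec : P m := hm ▸ Nat.findGreatest_spec (P := P) (Nat.zero_le _) hP0
  obtain ⟨T, hTc, hT1, hT2⟩ := hspec
  refine ⟨T, hT1, fun x hx => ?_, card_le_of_separated_sphere hδ T hT1 hT2⟩
  by_contra! hcon
  have hxT : x ∉ T := fun h => by
    have := hcon x h
    simp only [sub_self, norm_zero] at this
    linarith
  have hP : P (T.card + 1) := by
    refine ⟨insert x T, Finset.card_insert_of_notMem hxT, ?_, ?_⟩
    · intro y hy
      rcases Finset.mem_insert.1 hy with rfl | hy
      exacts [hx, hT1 y hy]
    · intro y hy z hz hyz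
      rcases Finset.mem_insert.1 hy with hy' | hy' <;> rcases Finset.mem_insert.1 hz with hz' | hz'
      · exact absurd (hy'.trans hz'.symm) hyz
      · rw [hy']; exact hcon z hz'
      · rw [norm_sub_rev, hz']; exact hcon y hy'
      · exact hT2 y hy' z hz' hyz
  have := Nat.le_findGreatest (hPle _ hP) hP
  rw [← hm] at this
  omega

/-- A quadratic form bounded by `m` on the unit sphere is `2 m`-Lipschitz there. The hypothesis `hq`
is the consequence of polarization that is needed; with `a = δ/2` the two vectors on its left-hand
side have squared norms adding up to at most `4 δ²`. -/
theorem abs_quadratic_sub_le {E : Type*} [NormedAddCommGroup E] [InnerProductSpace ℝ E]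
    {q : E → ℝ} {m δ : ℝ} (hδ : 0 < δ) (hm : 0 ≤ m)
    (hq : ∀ (a : ℝ) (x y : E),
      q ((a + 1) • x + (a - 1) • y) - q ((a - 1) • x + (a + 1) • y) = 4 * a * (q x - q y))
    (hb : ∀ x, |q x| ≤ m * ‖x‖ ^ 2) {x y : E} (hx : ‖x‖ = 1) (hy : ‖y‖ = 1)
    (hxy : ‖x - y‖ ≤ δ) : |q x - q y| ≤ 2 * δ * m := by
  have h1 := hq (δ / 2) x y
  have h2 := hb ((δ / 2 + 1) • x + (δ / 2 - 1) • y)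
  have h3 := hb ((δ / 2 - 1) • x + (δ / 2 + 1) • y)
  have e1 : ‖(δ / 2 + 1) • x + (δ / 2 - 1) • y‖ ^ 2 + ‖(δ / 2 - 1) • x + (δ / 2 + 1) • y‖ ^ 2
      = 2 * ((δ / 2) ^ 2 * ‖x + y‖ ^ 2 + ‖x - y‖ ^ 2) := by
    simp only [norm_add_sq_real, norm_sub_sq_real, norm_smul, real_inner_smul_left,
      real_inner_smul_right, mul_pow, Real.norm_eq_abs, sq_abs]
    ring
  have e2 : ‖x + y‖ ^ 2 ≤ 4 := by
    have : ‖x + y‖ ≤ 2 := (norm_add_le _ _).trans (by rw [hx, hy]; norm_num)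
    nlinarith [norm_nonneg (x + y)]
  have e3 : ‖x - y‖ ^ 2 ≤ δ ^ 2 := pow_le_pow_left₀ (norm_nonneg _) hxy 2
  have e4 : ‖(δ / 2 + 1) • x + (δ / 2 - 1) • y‖ ^ 2 + ‖(δ / 2 - 1) • x + (δ / 2 + 1) • y‖ ^ 2
      ≤ 4 * δ ^ 2 := by
    rw [e1]; nlinarith [sq_nonneg δ]
  have e5 := mul_le_mul_of_nonneg_left e4 hm
  rw [abs_le] at h2 h3 ⊢
  constructor <;> nlinarith

/-! ### The support function of the biseparable states -/

/-- The expectation value `Re Tr(X · |φ⟩⟨φ| ⊗ |ψ⟩⟨ψ|)` of `X` in a pure product state. -/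
def prodForm {k d : ℕ} (X : MOp k d) (b : Finset (Fin k)) (φ : EuclideanSpace ℂ (SubIdx d b))
    (ψ : EuclideanSpace ℂ (CoIdx d b)) : ℝ :=
  ((X * prodPure b φ.ofLp ψ.ofLp).trace).re

theorem re_trace_mul_smul {ι : Type*} [Fintype ι] (X M : Matrix ι ι ℂ) (a : ℝ) :
    ((X * (a • M)).trace).re = a * ((X * M).trace).re := by
  rw [Matrix.mul_smul, Matrix.trace_smul, Complex.smul_re, smul_eq_mul]

/-- `prodForm` is a quadratic form in `φ`, in the form required by `abs_quadratic_sub_le`. -/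
theorem prodForm_left_identity {k d : ℕ} (X : MOp k d) (b : Finset (Fin k))
    (ψ : EuclideanSpace ℂ (CoIdx d b)) (a : ℝ) (x y : EuclideanSpace ℂ (SubIdx d b)) :
    prodForm X b ((a + 1) • x + (a - 1) • y) ψ - prodForm X b ((a - 1) • x + (a + 1) • y) ψ
      = 4 * a * (prodForm X b x ψ - prodForm X b y ψ) := by
  have h : prodPure b ((a + 1) • x + (a - 1) • y).ofLp ψ.ofLp
      - prodPure b ((a - 1) • x + (a + 1) • y).ofLp ψ.ofLp
      = (4 * a) • (prodPure b x.ofLp ψ.ofLp - prodPure b y.ofLp ψ.ofLp) := by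
    ext i j
    simp [prodPure]
    ring
  simp only [prodForm]
  rw [← Complex.sub_re, ← Matrix.trace_sub, ← Matrix.mul_sub, h, re_trace_mul_smul,
    Matrix.mul_sub, Matrix.trace_sub, Complex.sub_re]

/-- `prodForm` is a quadratic form in `ψ`, in the form required by `abs_quadratic_sub_le`. -/
theorem prodForm_right_identity {k d : ℕ} (X : MOp k d) (b : Finset (Fin k))
    (φ : EuclideanSpace ℂ (SubIdx d b)) (a : ℝ) (x y : EuclideanSpace ℂ (CoIdx d b)) :
    prodForm X b φ ((a + 1) • x + (a - 1) • y) - prodForm X b φ ((a - 1) • x + (a + 1) • y)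
      = 4 * a * (prodForm X b φ x - prodForm X b φ y) := by
  have h : prodPure b φ.ofLp ((a + 1) • x + (a - 1) • y).ofLp
      - prodPure b φ.ofLp ((a - 1) • x + (a + 1) • y).ofLp
      = (4 * a) • (prodPure b φ.ofLp x.ofLp - prodPure b φ.ofLp y.ofLp) := by
    ext i j
    simp [prodPure]
    ring
  simp only [prodForm]
  rw [← Complex.sub_re, ← Matrix.trace_sub, ← Matrix.mul_sub, h, re_trace_mul_smul,
    Matrix.mul_sub, Matrix.trace_sub, Complex.sub_re]

theorem prodForm_smul_smul {k d : ℕ} (X : MOp k d) (b : Finset (Fin k))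
    (φ : EuclideanSpace ℂ (SubIdx d b)) (ψ : EuclideanSpace ℂ (CoIdx d b)) (r s : ℝ) :
    prodForm X b (r • φ) (s • ψ) = (r * s) ^ 2 * prodForm X b φ ψ := by
  have h : prodPure b (r • φ).ofLp (s • ψ).ofLp = ((r * s) ^ 2) • prodPure b φ.ofLp ψ.ofLp := by
    ext i j
    simp [prodPure]
    ring
  simp only [prodForm]
  rw [h, re_trace_mul_smul]

theorem sum_norm_sq_prod {k d : ℕ} (b : Finset (Fin k)) (φ : SubIdx d b → ℂ)
    (ψ : CoIdx d b → ℂ) :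
    ∑ x : MIdx k d, ‖φ (restr b x)‖ ^ 2 * ‖ψ (corestr b x)‖ ^ 2
      = (∑ x, ‖φ x‖ ^ 2) * ∑ y, ‖ψ y‖ ^ 2 := by
  rw [Finset.sum_mul_sum, ← Fintype.sum_prod_type']
  exact Fintype.sum_equiv (Equiv.piEquivPiSubtypeProd (fun i => i ∈ b) fun _ => Fin d) _ _
    fun x => rfl

theorem sum_norm_sq_prodPure {k d : ℕ} (b : Finset (Fin k)) (φ : SubIdx d b → ℂ)
    (ψ : CoIdx d b → ℂ) :
    ∑ x, ∑ y, ‖prodPure b φ ψ x y‖ ^ 2 = ((∑ x, ‖φ x‖ ^ 2) * ∑ y, ‖ψ y‖ ^ 2) ^ 2 := by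
  rw [← sum_norm_sq_prod, sq, Finset.sum_mul_sum]
  refine Finset.sum_congr rfl fun x _ => Finset.sum_congr rfl fun y _ => ?_
  simp only [prodPure, norm_mul, norm_star]
  ring

theorem abs_re_trace_mul_le {ι : Type*} [Fintype ι] (X P : Matrix ι ι ℂ) :
    |((X * P).trace).re| ≤ √(∑ x, ∑ y, ‖X x y‖ ^ 2) * √(∑ x, ∑ y, ‖P x y‖ ^ 2) := by
  refine (Complex.abs_re_le_norm _).trans ?_
  simp only [Matrix.trace, Matrix.diag, Matrix.mul_apply]
  have e : ∑ x, ∑ y, ‖P x y‖ ^ 2 = ∑ x, ∑ y, ‖P y x‖ ^ 2 := Finset.sum_comm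
  rw [e, ← Fintype.sum_prod_type', ← Fintype.sum_prod_type', ← Fintype.sum_prod_type']
  refine (norm_sum_le _ _).trans ?_
  simp only [norm_mul]
  exact Real.sum_mul_le_sqrt_mul_sqrt _ _ _

theorem sum_norm_sq_of_isHermitian {ι : Type*} [Fintype ι] {X : Matrix ι ι ℂ}
    (hX : X.IsHermitian) : ∑ x, ∑ y, ‖X x y‖ ^ 2 = ((X * X).trace).re := by
  simp only [Matrix.trace, Matrix.diag, Matrix.mul_apply, Complex.re_sum]
  refine Finset.sum_congr rfl fun x _ => Finset.sum_congr rfl fun y _ => ?_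
  rw [← hX.apply y x, RCLike.star_def, Complex.mul_conj, Complex.ofReal_re, Complex.normSq_eq_norm_sq]

section Param

variable {k d N : ℕ} {f : (EN N) →ₗ[ℝ] MOp k d}

theorem sqrt_sum_norm_sq_param (hf : IsHermParam f) (u : EN N) :
    √(∑ x, ∑ y, ‖f u x y‖ ^ 2) = ‖u‖ := by
  rw [sum_norm_sq_of_isHermitian (hf.herm u), hf.inner_eq, real_inner_self_eq_norm_sq,
    Real.sqrt_sq (norm_nonneg _)]

/-- Pure states have Hilbert–Schmidt norm `1`, so this is Cauchy–Schwarz. -/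
theorem abs_re_trace_prodPure_le (hf : IsHermParam f) (u : EN N) (b : Finset (Fin k))
    {φ : SubIdx d b → ℂ} {ψ : CoIdx d b → ℂ} (hφ : ∑ x, ‖φ x‖ ^ 2 = 1) (hψ : ∑ y, ‖ψ y‖ ^ 2 = 1) :
    |((f u * prodPure b φ ψ).trace).re| ≤ ‖u‖ := by
  refine (abs_re_trace_mul_le _ _).trans ?_
  rw [sqrt_sum_norm_sq_param hf, sum_norm_sq_prodPure, hφ, hψ]
  simp

/-- A linear functional is maximised over the biseparable states at a pure product state. -/
theorem re_trace_le_of_biseparable {X : MOp k d} {c : ℝ}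
    (h : ∀ b ∈ bipartitions k, ∀ (φ : SubIdx d b → ℂ) (ψ : CoIdx d b → ℂ),
      ∑ x, ‖φ x‖ ^ 2 = 1 → ∑ y, ‖ψ y‖ ^ 2 = 1 → ((X * prodPure b φ ψ).trace).re ≤ c)
    {M : MOp k d} (hM : M ∈ Biseparable k d) : ((X * M).trace).re ≤ c := by
  have hlin : IsLinearMap ℝ fun M : MOp k d => ((X * M).trace).re :=
    ⟨fun A B => by rw [Matrix.mul_add, Matrix.trace_add, Complex.add_re],
      fun a A => by rw [re_trace_mul_smul, smul_eq_mul]⟩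
  have hconv : Convex ℝ {M : MOp k d | ((X * M).trace).re ≤ c} := convex_halfSpace_le hlin c
  refine convexHull_min (iUnion₂_subset fun b hb => convexHull_min ?_ hconv) hconv hM
  rintro _ ⟨φ, ψ, hφ, hψ, rfl⟩
  exact h b hb φ ψ hφ hψ

theorem re_trace_biseparable_le_norm (hf : IsHermParam f) (u : EN N) {M : MOp k d}
    (hM : M ∈ Biseparable k d) : ((f u * M).trace).re ≤ ‖u‖ :=
  re_trace_le_of_biseparable
    (fun b _ _ _ hφ hψ => (le_abs_self _).trans (abs_re_trace_prodPure_le hf u b hφ hψ)) hM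

theorem prodPure_mem_biseparable {b : Finset (Fin k)} (hb : b ∈ bipartitions k)
    {φ : SubIdx d b → ℂ} {ψ : CoIdx d b → ℂ} (hφ : ∑ x, ‖φ x‖ ^ 2 = 1) (hψ : ∑ y, ‖ψ y‖ ^ 2 = 1) :
    prodPure b φ ψ ∈ Biseparable k d :=
  subset_convexHull ℝ _ (mem_iUnion₂.2 ⟨b, hb, subset_convexHull ℝ _ ⟨φ, ψ, hφ, hψ, rfl⟩⟩)

/-- Rank-one projections onto computational basis vectors are product states. -/
theorem single_mem_biseparable (hk : 2 ≤ k) (x : MIdx k d) :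
    Matrix.single x x (1 : ℂ) ∈ Biseparable k d := by
  have hb : ({⟨0, by omega⟩} : Finset (Fin k)) ∈ bipartitions k := by
    simp only [bipartitions, Finset.mem_filter, Finset.mem_univ, true_and,
      Finset.singleton_nonempty]
    intro h
    have := congrArg Finset.card h
    simp at this
    omega
  generalize ({⟨0, by omega⟩} : Finset (Fin k)) = b at hb
  have e : Matrix.single x x (1 : ℂ)
      = prodPure b (Pi.single (restr b x) 1) (Pi.single (corestr b x) 1) := by
    have key : ∀ y : MIdx k d, x = y ↔ restr b y = restr b x ∧ corestr b y = corestr b x := by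
      intro y
      refine ⟨fun h => by subst h; exact ⟨rfl, rfl⟩, fun ⟨h1, h2⟩ => funext fun i => ?_⟩
      by_cases hi : i ∈ b
      · exact (congrFun h1 ⟨i, hi⟩).symm
      · exact (congrFun h2 ⟨i, hi⟩).symm
    ext y z
    simp only [prodPure, Matrix.single, Matrix.of_apply, key, Pi.single_apply]
    split_ifs <;> simp_all
  rw [e]
  refine prodPure_mem_biseparable hb ?_ ?_ <;>
  · rw [Finset.sum_eq_single_of_mem _ (Finset.mem_univ _)
      (fun y _ hy => by rw [Pi.single_eq_of_ne hy]; simp)]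
    simp

/-- The support function of the set of biseparable states, in the coordinates given by `f`. -/
noncomputable def bisepSupport (f : (EN N) →ₗ[ℝ] MOp k d) (u : EN N) : ℝ :=
  sSup ((fun M => ((f u * M).trace).re) '' Biseparable k d)

theorem biseparable_nonempty (hk : 2 ≤ k) (hd : 2 ≤ d) : (Biseparable k d).Nonempty :=
  ⟨_, single_mem_biseparable hk fun _ => ⟨0, by omega⟩⟩

theorem le_bisepSupport (hf : IsHermParam f) (u : EN N) {M : MOp k d}
    (hM : M ∈ Biseparable k d) : ((f u * M).trace).re ≤ bisepSupport f u :=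
  le_csSup ⟨‖u‖, by rintro _ ⟨M, hM, rfl⟩; exact re_trace_biseparable_le_norm hf u hM⟩ ⟨M, hM, rfl⟩

theorem bisepSupport_le (hk : 2 ≤ k) (hd : 2 ≤ d) {u : EN N} {c : ℝ}
    (h : ∀ M ∈ Biseparable k d, ((f u * M).trace).re ≤ c) : bisepSupport f u ≤ c :=
  csSup_le ((biseparable_nonempty hk hd).image _) (by rintro _ ⟨M, hM, rfl⟩; exact h M hM)

theorem continuous_bisepSupport (hk : 2 ≤ k) (hd : 2 ≤ d) (hf : IsHermParam f) :
    Continuous (bisepSupport f) := by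
  refine (LipschitzWith.of_le_add fun u v => ?_).continuous
  refine bisepSupport_le hk hd fun M hM => ?_
  have h1 := le_bisepSupport hf v hM
  have h2 := re_trace_biseparable_le_norm hf (u - v) hM
  rw [map_sub, Matrix.sub_mul, Matrix.trace_sub, Complex.sub_re] at h2
  rw [dist_eq_norm]
  linarith

/-- The diagonal entries of the traceless matrix `f u` are its values on the basis product states, and
they sum to zero. -/
theorem bisepSupport_nonneg (hk : 2 ≤ k) (hd : 2 ≤ d) (hf : IsHermParam f) (u : EN N) :
    0 ≤ bisepSupport f u := by
  by_contra! hneg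
  have h : ∀ x, (f u x x).re < 0 := fun x => by
    have := le_bisepSupport hf u (single_mem_biseparable hk x)
    rw [Matrix.trace_mul_single] at this
    simp at this
    linarith
  have ht := congrArg Complex.re (hf.traceless u)
  simp only [Matrix.trace, Matrix.diag, Complex.re_sum, Complex.zero_re] at ht
  have : Nonempty (MIdx k d) := ⟨fun _ => ⟨0, by omega⟩⟩
  have := Finset.sum_neg (fun x _ => h x) (Finset.univ_nonempty (α := MIdx k d))
  linarith

/-- Urysohn's inequality for the biseparable states. Centring at the maximally mixed state does not
change the support function, as `f u` is traceless. -/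
theorem matVolRad_le_matMeanWidth (hk : 2 ≤ k) (hd : 2 ≤ d) (hN : 0 < N) (hf : IsHermParam f) :
    matVolRad f (Biseparable k d) ≤ matMeanWidth f (Biseparable k d) := by
  refine urysohn hN ((continuous_bisepSupport hk hd hf).comp continuous_subtype_val)
    (fun u => bisepSupport_nonneg hk hd hf _) ?_
  rintro x ⟨M, hM, hx⟩ u
  have e : ⟪(u : EN N), x⟫ = ((f u * M).trace).re := by
    have hx' : M = f x + maxMixed (MIdx k d) := by rw [← hx]; simp
    rw [hx', Matrix.mul_add, Matrix.trace_add, maxMixed, Matrix.mul_smul, Matrix.trace_smul,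
      Matrix.mul_one, hf.traceless, smul_zero, add_zero, hf.inner_eq]
  rw [e]
  exact le_bisepSupport hf _ hM

end Param

/-! ### The mean width of the biseparable states -/

theorem finrank_real_euclideanSpace_complex (ι : Type*) [Fintype ι] :
    Module.finrank ℝ (EuclideanSpace ℂ ι) = 2 * Fintype.card ι := by
  rw [(WithLp.linearEquiv 2 ℝ (ι → ℂ)).finrank_eq, Module.finrank_pi_fintype]
  simp [Complex.finrank_real_complex, mul_comm]

/-- Every unit sphere of `ℂ^ι` has a `1/20`-net of at most `41 ^ (2 |ι|)` points. -/
theorem exists_complex_sphere_net (ι : Type*) [Fintype ι] :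
    ∃ T : Finset (EuclideanSpace ℂ ι), (∀ x ∈ T, ‖x‖ = 1) ∧
      (∀ x, ‖x‖ = 1 → ∃ y ∈ T, ‖x - y‖ ≤ 1 / 20) ∧ T.card ≤ 41 ^ (2 * Fintype.card ι) := by
  obtain ⟨T, h1, h2, h3⟩ := exists_sphere_net (E := EuclideanSpace ℂ ι) (δ := 1 / 20) (by norm_num)
  refine ⟨T, h1, h2, ?_⟩
  rw [finrank_real_euclideanSpace_complex] at h3
  norm_num at h3
  exact_mod_cast h3

section Nets

variable {k d : ℕ}

theorem abs_prodForm_le_of_unit {X : MOp k d} {b : Finset (Fin k)} {m : ℝ}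
    (hm : ∀ φ ψ, ‖φ‖ = 1 → ‖ψ‖ = 1 → |prodForm X b φ ψ| ≤ m)
    (φ : EuclideanSpace ℂ (SubIdx d b)) (ψ : EuclideanSpace ℂ (CoIdx d b)) :
    |prodForm X b φ ψ| ≤ m * (‖φ‖ * ‖ψ‖) ^ 2 := by
  rcases eq_or_ne φ 0 with rfl | hφ
  · have := prodForm_smul_smul X b 0 ψ 0 1
    simp only [smul_zero, one_smul] at this
    rw [this]; simp
  rcases eq_or_ne ψ 0 with rfl | hψ
  · have := prodForm_smul_smul X b φ 0 1 0
    simp only [smul_zero, one_smul] at this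
    rw [this]; simp
  have h1 : ‖φ‖ ≠ 0 := norm_ne_zero_iff.2 hφ
  have h2 : ‖ψ‖ ≠ 0 := norm_ne_zero_iff.2 hψ
  have h := prodForm_smul_smul X b (‖φ‖⁻¹ • φ) (‖ψ‖⁻¹ • ψ) ‖φ‖ ‖ψ‖
  rw [smul_inv_smul₀ h1, smul_inv_smul₀ h2] at h
  rw [h, abs_mul, abs_of_nonneg (sq_nonneg _), mul_comm]
  refine mul_le_mul_of_nonneg_right (hm _ _ ?_ ?_) (sq_nonneg _)
  · rw [norm_smul, norm_inv, norm_norm, inv_mul_cancel₀ h1]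
  · rw [norm_smul, norm_inv, norm_norm, inv_mul_cancel₀ h2]

/-- Replacing `φ` and `ψ` by points of the `1/20`-nets costs `2 m / 20` each. -/
theorem abs_prodForm_le_of_net_step {X : MOp k d} {b : Finset (Fin k)} {m c : ℝ} (hm0 : 0 ≤ m)
    (hm : ∀ φ ψ, ‖φ‖ = 1 → ‖ψ‖ = 1 → |prodForm X b φ ψ| ≤ m)
    {T : Finset (EuclideanSpace ℂ (SubIdx d b))} {T' : Finset (EuclideanSpace ℂ (CoIdx d b))}
    (hT1 : ∀ x ∈ T, ‖x‖ = 1) (hT2 : ∀ x, ‖x‖ = 1 → ∃ y ∈ T, ‖x - y‖ ≤ 1 / 20)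
    (hT1' : ∀ x ∈ T', ‖x‖ = 1) (hT2' : ∀ x, ‖x‖ = 1 → ∃ y ∈ T', ‖x - y‖ ≤ 1 / 20)
    (hc : ∀ φ ∈ T, ∀ ψ ∈ T', |prodForm X b φ ψ| ≤ c)
    {φ : EuclideanSpace ℂ (SubIdx d b)} {ψ : EuclideanSpace ℂ (CoIdx d b)}
    (hφ : ‖φ‖ = 1) (hψ : ‖ψ‖ = 1) : |prodForm X b φ ψ| ≤ c + m / 5 := by
  obtain ⟨φ₀, hφ₀, hφφ₀⟩ := hT2 φ hφ
  obtain ⟨ψ₀, hψ₀, hψψ₀⟩ := hT2' ψ hψ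
  have h1 : |prodForm X b φ ψ - prodForm X b φ₀ ψ| ≤ 2 * (1 / 20) * m := by
    refine abs_quadratic_sub_le (q := fun x => prodForm X b x ψ) (by norm_num) hm0
      (prodForm_left_identity X b ψ) (fun x => ?_) hφ (hT1 _ hφ₀) hφφ₀
    simpa [hψ] using abs_prodForm_le_of_unit hm x ψ
  have h2 : |prodForm X b φ₀ ψ - prodForm X b φ₀ ψ₀| ≤ 2 * (1 / 20) * m := by
    refine abs_quadratic_sub_le (q := fun x => prodForm X b φ₀ x) (by norm_num) hm0
      (prodForm_right_identity X b φ₀) (fun x => ?_) hψ (hT1' _ hψ₀) hψψ₀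
    simpa [hT1 _ hφ₀] using abs_prodForm_le_of_unit hm φ₀ x
  have h3 := hc φ₀ hφ₀ ψ₀ hψ₀
  rw [abs_le] at *
  constructor <;> linarith

/-- The supremum `s` of `|prodForm|` over unit vectors satisfies `s ≤ c + s / 5`, by
`abs_prodForm_le_of_net_step`. -/
theorem abs_prodForm_le_of_net {X : MOp k d} {b : Finset (Fin k)} {m c : ℝ}
    (hm : ∀ φ ψ, ‖φ‖ = 1 → ‖ψ‖ = 1 → |prodForm X b φ ψ| ≤ m)
    {T : Finset (EuclideanSpace ℂ (SubIdx d b))} {T' : Finset (EuclideanSpace ℂ (CoIdx d b))}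
    (hT1 : ∀ x ∈ T, ‖x‖ = 1) (hT2 : ∀ x, ‖x‖ = 1 → ∃ y ∈ T, ‖x - y‖ ≤ 1 / 20)
    (hT1' : ∀ x ∈ T', ‖x‖ = 1) (hT2' : ∀ x, ‖x‖ = 1 → ∃ y ∈ T', ‖x - y‖ ≤ 1 / 20)
    (hc : ∀ φ ∈ T, ∀ ψ ∈ T', |prodForm X b φ ψ| ≤ c)
    {φ : EuclideanSpace ℂ (SubIdx d b)} {ψ : EuclideanSpace ℂ (CoIdx d b)}
    (hφ : ‖φ‖ = 1) (hψ : ‖ψ‖ = 1) : |prodForm X b φ ψ| ≤ 5 / 4 * c := by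
  set S : Set ℝ := {r | ∃ φ ψ, ‖φ‖ = 1 ∧ ‖ψ‖ = 1 ∧ r = |prodForm X b φ ψ|} with hS
  have hbdd : BddAbove S := ⟨m, by rintro _ ⟨φ, ψ, h1, h2, rfl⟩; exact hm φ ψ h1 h2⟩
  have hle : ∀ φ ψ, ‖φ‖ = 1 → ‖ψ‖ = 1 → |prodForm X b φ ψ| ≤ sSup S :=
    fun φ ψ h1 h2 => le_csSup hbdd ⟨φ, ψ, h1, h2, rfl⟩
  have h0 : 0 ≤ sSup S := (abs_nonneg _).trans (hle φ ψ hφ hψ)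
  have hsup : sSup S ≤ c + sSup S / 5 := by
    refine csSup_le ⟨_, φ, ψ, hφ, hψ, rfl⟩ ?_
    rintro _ ⟨φ, ψ, h1, h2, rfl⟩
    exact abs_prodForm_le_of_net_step h0 hle hT1 hT2 hT1' hT2' hc h1 h2
  linarith [hle φ ψ hφ hψ]

end Nets

section MeanWidth

variable {k d N : ℕ} {f : (EN N) →ₗ[ℝ] MOp k d}

theorem abs_prodForm_le_norm (hf : IsHermParam f) (u : EN N) (b : Finset (Fin k))
    {φ : EuclideanSpace ℂ (SubIdx d b)} {ψ : EuclideanSpace ℂ (CoIdx d b)}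
    (hφ : ‖φ‖ = 1) (hψ : ‖ψ‖ = 1) : |prodForm (f u) b φ ψ| ≤ ‖u‖ := by
  refine abs_re_trace_prodPure_le hf u b ?_ ?_
  · rw [← EuclideanSpace.norm_sq_eq, hφ, one_pow]
  · rw [← EuclideanSpace.norm_sq_eq, hψ, one_pow]

/-- The expectation value in a pure product state is the inner product with a vector `v` of norm at
most `1` (the traceless part of that state). -/
theorem exists_inner_eq_prodForm (hf : IsHermParam f) (b : Finset (Fin k))
    {φ : EuclideanSpace ℂ (SubIdx d b)} {ψ : EuclideanSpace ℂ (CoIdx d b)}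
    (hφ : ‖φ‖ = 1) (hψ : ‖ψ‖ = 1) :
    ∃ v : EN N, ‖v‖ ≤ 1 ∧ ∀ u : EN N, ⟪u, v⟫ = prodForm (f u) b φ ψ := by
  let l : (EN N) →ₗ[ℝ] ℝ :=
    { toFun := fun u => prodForm (f u) b φ ψ
      map_add' := fun u v => by
        simp only [prodForm, map_add, Matrix.add_mul, Matrix.trace_add, Complex.add_re]
      map_smul' := fun a u => by
        simp only [prodForm, map_smul, Matrix.smul_mul, Matrix.trace_smul, Complex.smul_re,
          RingHom.id_apply] }
  have hl : ∀ u, ‖l u‖ ≤ 1 * ‖u‖ := fun u => by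
    rw [one_mul]; exact abs_prodForm_le_norm hf u b hφ hψ
  refine ⟨(InnerProductSpace.toDual ℝ (EN N)).symm (l.mkContinuous 1 hl), ?_, fun u => ?_⟩
  · rw [LinearIsometryEquiv.norm_map]
    exact l.mkContinuous_norm_le zero_le_one hl
  · rw [real_inner_comm, InnerProductSpace.toDual_symm_apply]
    rfl

theorem card_subIdx_le (hd : 2 ≤ d) {b : Finset (Fin k)} (hb : b ∈ bipartitions k) :
    Fintype.card (SubIdx d b) ≤ d ^ (k - 1) ∧ Fintype.card (CoIdx d b) ≤ d ^ (k - 1) := by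
  simp only [bipartitions, Finset.mem_filter, Finset.mem_univ, true_and] at hb
  have h1 : 0 < b.card := hb.1.card_pos
  have h2 : b.card < k := by
    have := Finset.card_lt_univ_of_notMem
      (Classical.choose_spec (not_forall.1 (mt Finset.eq_univ_iff_forall.2 hb.2)))
    simpa using this
  have h3 : Fintype.card {i // i ∉ b} = k - b.card := by
    rw [Fintype.card_subtype_compl]; simp
  simp only [Fintype.card_fun, Fintype.card_fin, Fintype.card_coe, h3]
  exact ⟨Nat.pow_le_pow_right (by omega) (by omega), Nat.pow_le_pow_right (by omega) (by omega)⟩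

theorem bipartitions_card_le (k : ℕ) : (bipartitions k).card ≤ 2 ^ k :=
  (Finset.card_filter_le _ _).trans (by simp)

/-- Outside an event of small probability, the support function is at most `5/4 t`. The exceptional
set is a union of caps, one for each bipartition and each pair of net points: at most
`2 ^ k * 41 ^ (4 D)` of them with `D = d ^ (k - 1)`, as each factor has dimension at most `D`. -/
theorem exists_bad_set (hk : 2 ≤ k) (hd : 2 ≤ d) (hN : 0 < N) (hf : IsHermParam f) {t : ℝ}
    (ht : 0 ≤ t) :
    ∃ Z : Set (sphere (0 : EN N) 1), MeasurableSet Z ∧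
      sphereUniform N Z ≤ ENNReal.ofReal
        (2 ^ k * 41 ^ (4 * d ^ (k - 1)) * (2 * Real.exp (-(N * t ^ 2 / 2)))) ∧
      ∀ u ∉ Z, bisepSupport f (u : EN N) ≤ 5 / 4 * t := by
  choose T hT1 hT2 hT3 using fun b : Finset (Fin k) => exists_complex_sphere_net (SubIdx d b)
  choose T' hT1' hT2' hT3' using fun b : Finset (Fin k) => exists_complex_sphere_net (CoIdx d b)
  let I : Finset (Σ b : Finset (Fin k),
      EuclideanSpace ℂ (SubIdx d b) × EuclideanSpace ℂ (CoIdx d b)) :=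
    (bipartitions k).sigma fun b => T b ×ˢ T' b
  have hI : I.card ≤ 2 ^ k * 41 ^ (4 * d ^ (k - 1)) := by
    rw [Finset.card_sigma]
    refine (Finset.sum_le_card_nsmul _ _ (41 ^ (4 * d ^ (k - 1))) fun b hb => ?_).trans ?_
    · rw [Finset.card_product]
      refine (Nat.mul_le_mul (hT3 b) (hT3' b)).trans ?_
      rw [← pow_add]
      obtain ⟨h1, h2⟩ := card_subIdx_le hd hb
      exact Nat.pow_le_pow_right (by norm_num) (by omega)
    · rw [smul_eq_mul]
      exact Nat.mul_le_mul_right _ (bipartitions_card_le k)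
  let Y : (Σ b : Finset (Fin k), EuclideanSpace ℂ (SubIdx d b) × EuclideanSpace ℂ (CoIdx d b)) →
    Set (sphere (0 : EN N) 1) := fun i => {u | t ≤ |prodForm (f (u : EN N)) i.1 i.2.1 i.2.2|}
  have hY : ∀ i ∈ I, ∃ v : EN N, ‖v‖ ≤ 1 ∧ Y i = {u : sphere (0 : EN N) 1 | t ≤ |⟪(u : EN N), v⟫|} := by
    rintro ⟨b, φ, ψ⟩ hi
    rw [Finset.mem_sigma, Finset.mem_product] at hi
    obtain ⟨v, hv, hv'⟩ := exists_inner_eq_prodForm hf b (hT1 b φ hi.2.1) (hT1' b ψ hi.2.2)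
    exact ⟨v, hv, by simp only [Y, hv']⟩
  refine ⟨⋃ i ∈ I, Y i, Finset.measurableSet_biUnion _ fun i hi => ?_, ?_, fun u hu => ?_⟩
  · obtain ⟨v, -, hv⟩ := hY i hi
    rw [hv]
    exact (isClosed_le continuous_const (by fun_prop)).measurableSet
  · refine (measure_biUnion_finset_le _ _).trans ?_
    refine (Finset.sum_le_card_nsmul _ _
      (ENNReal.ofReal (2 * Real.exp (-(N * t ^ 2 / 2)))) fun i hi => ?_).trans ?_
    · obtain ⟨v, hv1, hv⟩ := hY i hi
      rw [hv]
      exact sphereUniform_abs_le hN hv1 ht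
    · rw [nsmul_eq_mul, ENNReal.ofReal_mul (p := 2 ^ k * 41 ^ (4 * d ^ (k - 1))) (by positivity)]
      refine mul_le_mul_left ?_ _
      rw [← ENNReal.ofReal_natCast]
      exact ENNReal.ofReal_le_ofReal (by exact_mod_cast hI)
  · refine bisepSupport_le hk hd fun M hM => re_trace_le_of_biseparable (fun b hb φ ψ hφ hψ => ?_) hM
    have hunit : ∀ φ ψ, ‖φ‖ = 1 → ‖ψ‖ = 1 → |prodForm (f (u : EN N)) b φ ψ| ≤ ‖(u : EN N)‖ :=
      fun _ _ h1 h2 => abs_prodForm_le_norm hf _ b h1 h2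
    refine (le_abs_self _).trans (abs_prodForm_le_of_net hunit (hT1 b) (hT2 b) (hT1' b) (hT2' b)
      (c := t) (fun φ hφ ψ hψ => ?_) (φ := WithLp.toLp 2 φ) (ψ := WithLp.toLp 2 ψ) ?_ ?_)
    · by_contra! hlt
      exact hu (mem_iUnion₂.2
        ⟨⟨b, φ, ψ⟩, Finset.mem_sigma.2 ⟨hb, Finset.mem_product.2 ⟨hφ, hψ⟩⟩, hlt.le⟩)
    · rw [← sq_eq_sq₀ (norm_nonneg _) zero_le_one, EuclideanSpace.norm_sq_eq, one_pow]
      exact hφ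
    · rw [← sq_eq_sq₀ (norm_nonneg _) zero_le_one, EuclideanSpace.norm_sq_eq, one_pow]
      exact hψ

/-- Off the exceptional set of `exists_bad_set` the support function is at most `5/4 t`, and on it at
most `1`. -/
theorem matMeanWidth_le (hk : 2 ≤ k) (hd : 2 ≤ d) (hN : 0 < N) (hf : IsHermParam f) {t : ℝ}
    (ht : 0 ≤ t) :
    matMeanWidth f (Biseparable k d) ≤
      5 / 4 * t + 2 ^ k * 41 ^ (4 * d ^ (k - 1)) * (2 * Real.exp (-(N * t ^ 2 / 2))) := by
  obtain ⟨Z, hZ, hZm, hZle⟩ := exists_bad_set hk hd hN hf ht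
  have := isProbabilityMeasure_sphereUniform hN
  have hle1 : ∀ u : sphere (0 : EN N) 1, bisepSupport f (u : EN N) ≤ 1 := fun u =>
    bisepSupport_le hk hd fun M hM => by
      simpa using re_trace_biseparable_le_norm hf (u : EN N) hM
  have hintegr : Integrable (fun u : sphere (0 : EN N) 1 => bisepSupport f (u : EN N))
      (sphereUniform N) := by
    refine Integrable.of_bound
      ((continuous_bisepSupport hk hd hf).comp continuous_subtype_val).aestronglyMeasurable 1
      (Filter.Eventually.of_forall fun u => ?_)
    rw [Real.norm_eq_abs, abs_of_nonneg (bisepSupport_nonneg hk hd hf _)]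
    exact hle1 u
  have hind : Integrable (Z.indicator fun _ => (1 : ℝ)) (sphereUniform N) :=
    (integrable_const 1).indicator hZ
  have h : ∫ u, bisepSupport f ((u : sphere (0 : EN N) 1) : EN N) ∂(sphereUniform N)
      ≤ ∫ u, (5 / 4 * t + Z.indicator (fun _ => (1 : ℝ)) u) ∂(sphereUniform N) := by
    refine integral_mono hintegr ((integrable_const _).add hind) fun u => ?_
    by_cases hu : u ∈ Z
    · simp only [indicator_of_mem hu]
      linarith [hle1 u]
    · simp only [indicator_of_notMem hu, add_zero]
      exact hZle u hu
  rw [integral_add (integrable_const _) hind, integral_indicator_const _ hZ] at h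
  simp only [integral_const, probReal_univ, smul_eq_mul, one_mul, mul_one] at h
  refine h.trans (by gcongr; exact ENNReal.toReal_le_of_le_ofReal (by positivity) hZm)

end MeanWidth

/-! ### Numerical estimates -/

theorem sq_le_three_pow (m : ℕ) : m ^ 2 ≤ 3 ^ m := by
  induction m with
  | zero => norm_num
  | succ m ih =>
    rcases m with _ | _ | m
    · norm_num
    · norm_num
    · calc (m + 1 + 1 + 1) ^ 2 ≤ (m + 1 + 1) ^ 2 * 3 := by
            have : (m + 1 + 1) ^ 2 * 3 = (m + 1 + 1 + 1) ^ 2 + (2 * m ^ 2 + 6 * m + 3) := by ring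
            omega
        _ ≤ 3 ^ (m + 1 + 1) * 3 := Nat.mul_le_mul_right 3 ih
        _ = 3 ^ (m + 1 + 1 + 1) := (pow_succ 3 _).symm

theorem log_two_le_log_nine : Real.log 2 ≤ 2 / 5 * Real.log 9 := by
  have h : Real.log ((2 : ℝ) ^ 5) ≤ Real.log (9 ^ 2) :=
    Real.log_le_log (by norm_num) (by norm_num)
  rw [Real.log_pow, Real.log_pow] at h
  push_cast at h
  linarith

theorem log_fortyone_le_log_nine : Real.log 41 ≤ 17 / 10 * Real.log 9 := by
  have h : Real.log ((41 : ℝ) ^ 10) ≤ Real.log (9 ^ 17) :=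
    Real.log_le_log (by norm_num) (by norm_num)
  rw [Real.log_pow, Real.log_pow] at h
  push_cast at h
  linarith

theorem log_nine_eq : Real.log 9 = 2 * Real.log 3 := by
  rw [show (9 : ℝ) = 3 ^ 2 by norm_num, Real.log_pow]
  norm_num

theorem one_le_log_nine : 1 ≤ Real.log 9 := by
  rw [Real.le_log_iff_exp_le (by norm_num)]
  linarith [Real.exp_one_lt_d9]

/-- The optimisation of the deviation level `t`: it is chosen so that the union bound on the
failure probability equals `3 ^ (-D)`, with `D = d ^ (k - 1)`. -/
theorem exists_deviation_level {k d : ℕ} (hk : 2 ≤ k) (hd : 2 ≤ d) :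
    ∃ t : ℝ, 0 ≤ t ∧
      5 / 4 * t + 2 ^ k * 41 ^ (4 * d ^ (k - 1)) *
          (2 * Real.exp (-(((d ^ k) ^ 2 - 1 : ℕ) * t ^ 2 / 2)))
        ≤ (6 * √(Real.log 9) * √((d : ℝ) ^ (k - 1)) + √(8 * k * Real.log 2)) / (d : ℝ) ^ k := by
  obtain ⟨D, hD⟩ : ∃ D : ℕ, D = d ^ (k - 1) := ⟨_, rfl⟩
  obtain ⟨n, hn⟩ : ∃ n : ℕ, n = d ^ k := ⟨_, rfl⟩
  have hD2 : 2 ≤ D := by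
    rw [hD]
    calc 2 ≤ d := hd
      _ = d ^ 1 := (pow_one d).symm
      _ ≤ d ^ (k - 1) := Nat.pow_le_pow_right (by omega) (by omega)
  have hnD : n ≤ D ^ 2 := by
    rw [hn, hD, ← pow_mul]
    exact Nat.pow_le_pow_right (by omega) (by omega)
  have hn4 : 4 ≤ n := by
    rw [hn]
    calc 4 = 2 ^ 2 := rfl
      _ ≤ d ^ 2 := Nat.pow_le_pow_left hd 2
      _ ≤ d ^ k := Nat.pow_le_pow_right (by omega) hk
  have hn3 : n ≤ 3 ^ D := hnD.trans (sq_le_three_pow D)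
  have hDr : (d : ℝ) ^ (k - 1) = D := by rw [hD]; push_cast; rfl
  have hnr : (d : ℝ) ^ k = n := by rw [hn]; push_cast; rfl
  have hNr : ((n ^ 2 - 1 : ℕ) : ℝ) = (n : ℝ) ^ 2 - 1 := by
    rw [Nat.cast_sub (Nat.one_le_pow _ _ (by omega))]; push_cast; rfl
  rw [← hD, ← hn, hDr, hnr, hNr]
  have hn4' : (4 : ℝ) ≤ n := by exact_mod_cast hn4
  have hD2' : (2 : ℝ) ≤ D := by exact_mod_cast hD2
  have hn3' : (n : ℝ) ≤ 3 ^ D := by exact_mod_cast hn3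
  have hNpos : 0 < (n : ℝ) ^ 2 - 1 := by nlinarith
  have l2 : 0 < Real.log 2 := Real.log_pos (by norm_num)
  have l3 : 0 < Real.log 3 := Real.log_pos (by norm_num)
  have l41 : 0 < Real.log 41 := Real.log_pos (by norm_num)
  have l9 := one_le_log_nine
  set R : ℝ := Real.log 2 + 4 * D * Real.log 41 + D * Real.log 3 with hR
  set L : ℝ := k * Real.log 2 + R with hL
  have hR0 : 0 ≤ R := by positivity
  have hL0 : 0 ≤ L := by positivity
  have hRle : R ≤ 15 / 2 * (D * Real.log 9) := by
    have h1 := log_two_le_log_nine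
    have h2 := log_fortyone_le_log_nine
    have h3 := log_nine_eq
    have h4 : 4 * D * Real.log 41 ≤ 4 * D * (17 / 10 * Real.log 9) := by gcongr
    nlinarith
  refine ⟨√(2 * L / ((n : ℝ) ^ 2 - 1)), Real.sqrt_nonneg _, ?_⟩
  rw [Real.sq_sqrt (by positivity)]
  have e1 : ((n : ℝ) ^ 2 - 1) * (2 * L / ((n : ℝ) ^ 2 - 1)) / 2 = L := by field_simp
  have e2 : (2 : ℝ) ^ k * 41 ^ (4 * D) * (2 * Real.exp (-L)) = ((3 : ℝ) ^ D)⁻¹ := by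
    have a1 : (2 : ℝ) ^ k = Real.exp (k * Real.log 2) := by
      rw [Real.exp_nat_mul, Real.exp_log (by norm_num)]
    have a2 : (41 : ℝ) ^ (4 * D) = Real.exp (4 * D * Real.log 41) := by
      have := Real.exp_nat_mul (Real.log 41) (4 * D)
      rw [Real.exp_log (by norm_num)] at this
      rw [← this]; push_cast; rfl
    have a3 : (3 : ℝ) ^ D = Real.exp (D * Real.log 3) := by
      rw [Real.exp_nat_mul, Real.exp_log (by norm_num)]
    have a4 : (2 : ℝ) = Real.exp (Real.log 2) := (Real.exp_log (by norm_num)).symm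
    rw [a1, a2, a3, ← Real.exp_neg]
    nth_rewrite 2 [a4]
    rw [← Real.exp_add, ← Real.exp_add, ← Real.exp_add]
    congr 1
    rw [hL, hR]; ring
  rw [e1, e2, le_div_iff₀ (by linarith)]
  have s1 : 1 ≤ √(D * Real.log 9) := by
    rw [Real.one_le_sqrt]; nlinarith
  have h1 : ((3 : ℝ) ^ D)⁻¹ * n ≤ 1 := by
    rw [inv_mul_le_iff₀ (by positivity)]; linarith
  have h2 : 5 / 4 * √(2 * L / ((n : ℝ) ^ 2 - 1)) * n
      ≤ 5 * √(D * Real.log 9) + √(8 * k * Real.log 2) := by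
    refine abs_le_of_sq_le_sq' ?_ (by positivity) |>.2
    rw [mul_pow, mul_pow, Real.sq_sqrt (by positivity), add_sq, mul_pow, Real.sq_sqrt (by positivity),
      Real.sq_sqrt (by positivity)]
    have b1 : (5 / 4 : ℝ) ^ 2 * (2 * L / ((n : ℝ) ^ 2 - 1)) * (n : ℝ) ^ 2 ≤ 10 / 3 * L := by
      rw [mul_div_assoc', div_mul_eq_mul_div, div_le_iff₀ hNpos]
      nlinarith [mul_nonneg hL0 (show (0 : ℝ) ≤ (n : ℝ) ^ 2 - 16 by nlinarith)]
    have b2 : 0 ≤ 2 * (5 * √(D * Real.log 9)) * √(8 * k * Real.log 2) := by positivity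
    have b3 : 0 ≤ k * Real.log 2 := by positivity
    rw [hL] at b1
    nlinarith
  have e3 : √(Real.log 9) * √(D : ℝ) = √(D * Real.log 9) := by
    rw [← Real.sqrt_mul (by linarith), mul_comm]
  rw [add_mul, mul_assoc 6, e3]
  linarith

/-- Every element of the set defining `C` is at least `6 √(ln 9)`, because `1 + 2/δ > 9`. -/
theorem six_mul_sqrt_log_nine_le {δ : ℝ} (h1 : 1 / 10 < δ) (h2 : δ < 1 / 4) :
    6 * √(Real.log 9) ≤ 6 * √(Real.log (1 + 2 / δ)) / (1 - 2 * δ ^ 2) ^ 2 := by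
  have h0 : 0 < δ := by linarith
  have h3 : 9 ≤ 1 + 2 / δ := by
    have : 8 ≤ 2 / δ := by rw [le_div_iff₀ h0]; linarith
    linarith
  have h4 : 0 < 1 - 2 * δ ^ 2 := by nlinarith
  have h5 : (1 - 2 * δ ^ 2) ^ 2 ≤ 1 := by nlinarith [sq_nonneg δ]
  have h6 : 6 * √(Real.log 9) ≤ 6 * √(Real.log (1 + 2 / δ)) := by gcongr
  rw [le_div_iff₀ (by positivity)]
  exact (mul_le_of_le_one_right (by positivity) h5).trans h6

theorem constant_at_one_eighth_le :
    6 * √(Real.log (1 + 2 / (1 / 8 : ℝ))) / (1 - 2 * (1 / 8 : ℝ) ^ 2) ^ 2 ≤ 11 := by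
  have h : Real.log (1 + 2 / (1 / 8 : ℝ)) ≤ 2.89 := by
    have e : (1 + 2 / (1 / 8 : ℝ)) = 2 ^ 4 * (17 / 16) := by norm_num
    rw [e, Real.log_mul (by norm_num) (by norm_num), Real.log_pow]
    have h1 := Real.log_le_sub_one_of_pos (show (0 : ℝ) < 17 / 16 by norm_num)
    have h2 := Real.log_two_lt_d9
    push_cast
    linarith
  have h' : √(Real.log (1 + 2 / (1 / 8 : ℝ))) ≤ 1.7 := by
    rw [Real.sqrt_le_iff]
    exact ⟨by norm_num, h.trans (by norm_num)⟩
  rw [div_le_iff₀ (by norm_num)]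
  refine (mul_le_mul_of_nonneg_left h' (by norm_num)).trans ?_
  norm_num

theorem rpow_half_identities {k d : ℕ} (hk : 2 ≤ k) (hd : 2 ≤ d) :
    (d : ℝ) ^ (((k : ℝ) - 1) / 2) = √((d : ℝ) ^ (k - 1)) ∧
      (d : ℝ) ^ (((k : ℝ) + 1) / 2) * √((d : ℝ) ^ (k - 1)) = (d : ℝ) ^ k := by
  have hd0 : (0 : ℝ) < d := by exact_mod_cast (by omega : 0 < d)
  have e : (d : ℝ) ^ (((k : ℝ) - 1) / 2) = √((d : ℝ) ^ (k - 1)) := by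
    rw [Real.sqrt_eq_rpow, ← Real.rpow_natCast, ← Real.rpow_mul hd0.le, Nat.cast_sub (by omega)]
    congr 1
    push_cast
    ring
  refine ⟨e, ?_⟩
  rw [← e, ← Real.rpow_add hd0, ← Real.rpow_natCast]
  congr 1
  ring

end Proof

/-- For every `k ≥ 2` and `d ≥ 2`, the set of biseparable states on
`(ℂ^d)^{⊗k}` satisfies `vrad(S_(2)) ≤ w(S_(2)) ≤ (C + C_{d,k}) / d^{(k+1)/2}`, where
`C = inf{6 √(ln(1+2/δ)) / (1-2δ²)² : 1/10 < δ < 1/4} ≤ 11` and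
`C_{d,k} = √(8 k ln 2) / d^{(k-1)/2} → 0` as `d → ∞`. -/
theorem biseparable_volume_upper_bound (k d : ℕ) (hk : 2 ≤ k) (hd : 2 ≤ d)
    (f : EuclideanSpace ℝ (Fin ((d ^ k) ^ 2 - 1)) →ₗ[ℝ] MOp k d)
    (hf : IsHermParam f) :
    matVolRad f (Biseparable k d) ≤ matMeanWidth f (Biseparable k d) ∧
    matMeanWidth f (Biseparable k d) ≤
      (sInf {x : ℝ | ∃ δ : ℝ, 1 / 10 < δ ∧ δ < 1 / 4 ∧
          x = 6 * Real.sqrt (Real.log (1 + 2 / δ)) / (1 - 2 * δ ^ 2) ^ 2} +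
        Real.sqrt (8 * k * Real.log 2) / (d : ℝ) ^ (((k : ℝ) - 1) / 2)) /
        (d : ℝ) ^ (((k : ℝ) + 1) / 2) ∧
    sInf {x : ℝ | ∃ δ : ℝ, 1 / 10 < δ ∧ δ < 1 / 4 ∧
        x = 6 * Real.sqrt (Real.log (1 + 2 / δ)) / (1 - 2 * δ ^ 2) ^ 2} ≤ 11 ∧
    Filter.Tendsto
      (fun d' : ℕ => Real.sqrt (8 * k * Real.log 2) / (d' : ℝ) ^ (((k : ℝ) - 1) / 2))
      Filter.atTop (nhds 0) := by
  have hN : 0 < (d ^ k) ^ 2 - 1 := by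
    have h : 2 ≤ d ^ k := hd.trans (Nat.le_self_pow (by omega) d)
    have : 1 < (d ^ k) ^ 2 := Nat.one_lt_pow (by norm_num) (by omega)
    omega
  set S : Set ℝ := {x : ℝ | ∃ δ : ℝ, 1 / 10 < δ ∧ δ < 1 / 4 ∧
    x = 6 * Real.sqrt (Real.log (1 + 2 / δ)) / (1 - 2 * δ ^ 2) ^ 2} with hS
  have hlb : ∀ x ∈ S, 6 * √(Real.log 9) ≤ x := by
    rintro _ ⟨δ, h1, h2, rfl⟩
    exact six_mul_sqrt_log_nine_le h1 h2
  have hmem : 6 * √(Real.log (1 + 2 / (1 / 8 : ℝ))) / (1 - 2 * (1 / 8 : ℝ) ^ 2) ^ 2 ∈ S :=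
    ⟨1 / 8, by norm_num, by norm_num, rfl⟩
  refine ⟨matVolRad_le_matMeanWidth hk hd hN hf, ?_, ?_, ?_⟩
  · obtain ⟨t, ht, hbound⟩ := exists_deviation_level hk hd
    refine (matMeanWidth_le hk hd hN hf ht).trans (hbound.trans ?_)
    obtain ⟨e1, e2⟩ := rpow_half_identities hk hd
    have hd0 : (0 : ℝ) < d := by exact_mod_cast (by omega : 0 < d)
    have hs : 0 < √((d : ℝ) ^ (k - 1)) := Real.sqrt_pos.2 (by positivity)
    have hC : 6 * √(Real.log 9) ≤ sInf S := le_csInf ⟨_, hmem⟩ hlb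
    rw [e1, ← e2, ← div_div, div_right_comm, add_div, mul_div_cancel_right₀ _ hs.ne']
    gcongr
  · exact (csInf_le ⟨_, hlb⟩ hmem).trans constant_at_one_eighth_le
  · have hpos : 0 < ((k : ℝ) - 1) / 2 := by
      have : (2 : ℝ) ≤ k := by exact_mod_cast hk
      linarith
    exact ((tendsto_rpow_atTop hpos).comp tendsto_natCast_atTop_atTop).const_div_atTop _
end
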